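/- (Theorem 23) Let 0 < θ, θ₀ < 1, 0 < q₀, r, r₀, r₁ ≤ ∞, a, b₀, b₁, a₀ ∈ SV, ‖s^{-1/r₀} b₀(s)/a₀(s)‖_{r₀,(0,1)} < ∞, and ‖s^{-1/r₁} b₁(s)‖_{r₁,(0,1)} < ∞. Put c₀(t) = a₀(t) ‖s^{-1/r₀} b₀(s)/a₀(s)‖_{r₀,(0,t)}, c₁(t) = ‖s^{-1/r₁} b₁(s)‖_{r₁,(0,t)}, and ρ(t) = t^{1-θ₀} c₀(t)/c₁(t). Then (Ā^𝓡_{θ₀,r₀,b₀,q₀,a₀}, Ā_{1,r₁;b₁})_{θ,r;a} ≅ Ā_{η,r;a^#}, where η = (1-θ)θ₀ + θ and a^#(t) = c₀(t)^{1-θ} c₁(t)^θ a(ρ(t)). -/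

import Mathlib

open MeasureTheory Set ENNReal Filter

noncomputable section

/-- The `L_q` quasi-norm (with respect to Lebesgue measure) of an `ℝ≥0∞`-valued
function over a set of reals; for `q = ∞` it is the essential supremum. -/
def LqNorm (q : ℝ≥0∞) (s : Set ℝ) (g : ℝ → ℝ≥0∞) : ℝ≥0∞ :=
  if q = ∞ then essSup g (volume.restrict s)
  else (∫⁻ t in s, g t ^ q.toReal) ^ q⁻¹.toReal

/-- The weight `s ↦ s ^ (-1/r) * b s`, as an `ℝ≥0∞`-valued function
(`1/∞ = 0` by convention). -/
def svWgt (r : ℝ≥0∞) (b : ℝ → ℝ) : ℝ → ℝ≥0∞ :=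
  fun s => ENNReal.ofReal (s ^ (-(r⁻¹.toReal)) * b s)

/-- `f` and `g` are equivalent on `s`: each is bounded by a constant multiple
of the other there. -/
def EquivOn (s : Set ℝ) (f g : ℝ → ℝ) : Prop :=
  ∃ C : ℝ, 0 < C ∧ ∀ t ∈ s, C⁻¹ * g t ≤ f t ∧ f t ≤ C * g t

/-- A positive measurable function `b` on `(0,∞)` is slowly varying if for every
`ε > 0`, `t ^ ε * b t` is equivalent to a non-decreasing function and
`t ^ (-ε) * b t` is equivalent to a non-increasing function. -/
def SlowlyVarying (b : ℝ → ℝ) : Prop :=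
  AEMeasurable b (volume.restrict (Ioi 0)) ∧ (∀ t ∈ Ioi (0:ℝ), 0 < b t) ∧
    ∀ ε : ℝ, 0 < ε →
      (∃ g : ℝ → ℝ, MonotoneOn g (Ioi 0) ∧ EquivOn (Ioi 0) (fun t => t ^ ε * b t) g) ∧
      (∃ g : ℝ → ℝ, AntitoneOn g (Ioi 0) ∧ EquivOn (Ioi 0) (fun t => t ^ (-ε) * b t) g)

/-- A quasi-Banach space continuously embedded into the ambient (Hausdorff) space `E`,
recorded via its extended-real-valued quasi-norm; the space itself is the set of
vectors of finite quasi-norm. -/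
structure QuasiBanach (E : Type*) [AddCommGroup E] [Module ℝ E] where
  N : E → ℝ≥0∞
  zero : N 0 = 0
  definite : ∀ x, N x = 0 → x = 0
  smul : ∀ (c : ℝ) (x : E), N (c • x) = ENNReal.ofReal |c| * N x
  quasi : ∃ C : ℝ≥0∞, 1 ≤ C ∧ C ≠ ∞ ∧ ∀ x y, N (x + y) ≤ C * (N x + N y)
  complete : ∀ f : ℕ → E,
    (∀ ε : ℝ≥0∞, 0 < ε → ∃ M : ℕ, ∀ m ≥ M, ∀ n ≥ M, N (f m - f n) < ε) →
    (∀ n, N (f n) ≠ ∞) →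
    ∃ g : E, N g ≠ ∞ ∧ Tendsto (fun n => N (f n - g)) atTop (nhds 0)

variable {E : Type*} [AddCommGroup E] [Module ℝ E]

/-- The Peetre K-functional of the couple whose quasi-norms are `N₀`, `N₁`. -/
def Kf (N₀ N₁ : E → ℝ≥0∞) (t : ℝ) (f : E) : ℝ≥0∞ :=
  ⨅ g : E, N₀ g + ENNReal.ofReal t * N₁ (f - g)

/-- The quasi-norm of the real interpolation space `Ā_{θ,q;b}`. -/
def normK (N₀ N₁ : E → ℝ≥0∞) (θ : ℝ) (q : ℝ≥0∞) (b : ℝ → ℝ) (f : E) : ℝ≥0∞ :=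
  LqNorm q (Ioi 0) fun u =>
    ENNReal.ofReal (u ^ (-θ - q⁻¹.toReal) * b u) * Kf N₀ N₁ u f

/-- The quasi-norm of the limiting interpolation space `Ā^𝓛_{σ,r,b,q,a}`. -/
def normL (N₀ N₁ : E → ℝ≥0∞) (σ : ℝ) (r q : ℝ≥0∞) (b a : ℝ → ℝ) (f : E) : ℝ≥0∞ :=
  LqNorm r (Ioi 0) fun t =>
    ENNReal.ofReal (t ^ (-(r⁻¹.toReal)) * (b t / a t)) *
      LqNorm q (Ioo 0 t) fun u =>
        ENNReal.ofReal (u ^ (-σ - q⁻¹.toReal) * a u) * Kf N₀ N₁ u f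

/-- The quasi-norm of the limiting interpolation space `Ā^𝓡_{σ,r,b,q,a}`. -/
def normR (N₀ N₁ : E → ℝ≥0∞) (σ : ℝ) (r q : ℝ≥0∞) (b a : ℝ → ℝ) (f : E) : ℝ≥0∞ :=
  LqNorm r (Ioi 0) fun t =>
    ENNReal.ofReal (t ^ (-(r⁻¹.toReal)) * (b t / a t)) *
      LqNorm q (Ioi t) fun u =>
        ENNReal.ofReal (u ^ (-σ - q⁻¹.toReal) * a u) * Kf N₀ N₁ u f

/-- Two (extended-real-valued) quasi-norms define the same space with
equivalent quasi-norms. -/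
def EquivNorms (nX nY : E → ℝ≥0∞) : Prop :=
  ∃ C : ℝ≥0∞, 0 < C ∧ C ≠ ∞ ∧ ∀ f : E, C⁻¹ * nY f ≤ nX f ∧ nX f ≤ C * nY f

/-!
Only the values of the K-functional at the points `2 ^ j` matter: all weights in sight vary
regularly, so every norm is comparable to an `ℓ_r` norm over `ℤ`, and constants are absorbed in the
relation `≼`. Write `w(t) = t ^ (-θ₀) * c₀(t)`, `v(t) = t⁻¹ * c₁(t)` and let `p` be the least of `1`
and the exponents. The 𝓡-space lies near the left endpoint with weight `w`, the space
`Ā_{1,r₁;b₁}` near the right endpoint with weight `v`, and this yields Holmstedt's formula for the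
K-functional `K'` of the two spaces at the points `ρ = w / v`:
`w(2 ^ j) * K(2 ^ j, f) ≼ K'(ρ(2 ^ j), f)`, and `K'(ρ(2 ^ j), f)` is dominated by
`‖w * K(·, f)‖_{p, k ≤ j} + ρ(2 ^ j) * ‖v * K(·, f)‖_{p, k ≥ j}`.
Since `ρ` varies regularly with positive index, `t = ρ(2 ^ j)` may replace `t = 2 ^ j` in the norm
of the reiterated space, and Hardy's inequalities, which come from Young's inequality with a
geometric kernel, remove the sums over `k ≤ j` and `k ≥ j`.
-/

/-- `F` is dominated by `G`, i.e. `F i ≤ C * G i` with a finite constant `C` uniform in the index.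
Estimates between quasi-norms are stated for families indexed by vectors and dyadic scales, so that
multiplicative constants never have to be named. -/
def Dominated {ι : Type*} (F G : ι → ℝ≥0∞) : Prop :=
  ∃ C : NNReal, ∀ i, F i ≤ C * G i

local infix:50 " ≼ " => Dominated

namespace Dominated

variable {ι κ : Type*} {F F' G G' H : ι → ℝ≥0∞}

lemma of_le (h : ∀ i, F i ≤ G i) : F ≼ G := ⟨1, fun i => by simpa using h i⟩

lemma refl (F : ι → ℝ≥0∞) : F ≼ F := of_le fun _ => le_rfl

lemma trans (h : F ≼ G) (h' : G ≼ H) : F ≼ H := by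
  obtain ⟨C, hC⟩ := h
  obtain ⟨D, hD⟩ := h'
  refine ⟨C * D, fun i => (hC i).trans ?_⟩
  rw [ENNReal.coe_mul, mul_assoc]
  gcongr
  exact hD i

lemma congr (h : F ≼ G) (hF : ∀ i, F i = F' i) (hG : ∀ i, G i = G' i) : F' ≼ G' := by
  rwa [← funext hF, ← funext hG]

lemma comp (h : F ≼ G) (φ : κ → ι) : (fun k => F (φ k)) ≼ fun k => G (φ k) :=
  h.imp fun _ hC k => hC (φ k)

lemma mul (h : F ≼ G) (h' : F' ≼ G') : (fun i => F i * F' i) ≼ fun i => G i * G' i := by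
  obtain ⟨C, hC⟩ := h
  obtain ⟨D, hD⟩ := h'
  refine ⟨C * D, fun i => (mul_le_mul' (hC i) (hD i)).trans_eq ?_⟩
  rw [ENNReal.coe_mul]
  ring

lemma mul_left (W : ι → ℝ≥0∞) (h : F ≼ G) : (fun i => W i * F i) ≼ fun i => W i * G i :=
  (refl W).mul h

lemma add (h : F ≼ G) (h' : F' ≼ G') : (fun i => F i + F' i) ≼ fun i => G i + G' i := by
  obtain ⟨C, hC⟩ := h
  obtain ⟨D, hD⟩ := h'
  refine ⟨C + D, fun i => (add_le_add (hC i) (hD i)).trans ?_⟩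
  rw [ENNReal.coe_add, mul_add, add_mul, add_mul]
  gcongr
  · exact le_self_add
  · exact le_add_self

lemma add_le (h : F ≼ H) (h' : F' ≼ H) : (fun i => F i + F' i) ≼ H :=
  (h.add h').trans ⟨2, fun i => (two_mul (H i)).ge⟩

lemma iInf [Nonempty κ] {F G : ι × κ → ℝ≥0∞} (h : F ≼ G) :
    (fun i => ⨅ k, F (i, k)) ≼ fun i => ⨅ k, G (i, k) := by
  obtain ⟨C, hC⟩ := h
  refine ⟨C, fun i => ?_⟩
  change _ ≤ C * ⨅ k, G (i, k)
  rw [ENNReal.mul_iInf (by simp)]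
  exact iInf_mono fun k => hC (i, k)

end Dominated

/-- Two families are comparable when each is dominated by the other. -/
def Comparable {ι : Type*} (F G : ι → ℝ≥0∞) : Prop := F ≼ G ∧ G ≼ F

namespace Comparable

variable {ι : Type*} {F G H : ι → ℝ≥0∞}

lemma symm (h : Comparable F G) : Comparable G F := And.symm h

lemma trans (h : Comparable F G) (h' : Comparable G H) : Comparable F H :=
  ⟨h.1.trans h'.1, h'.2.trans h.2⟩

end Comparable

section Lebesgue

variable {α ι : Type*} [MeasurableSpace α] {μ : Measure α}

lemma eLpNorm_const_mul_of_aemeasurable {x : α → ℝ≥0∞} (hx : AEMeasurable x μ) (p c : ℝ≥0∞) :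
    eLpNorm (fun a => c * x a) p μ = c * eLpNorm x p μ := by
  rcases eq_or_ne p 0 with rfl | h0
  · simp
  rcases eq_or_ne p ∞ with rfl | hp
  · exact ENNReal.essSup_const_mul
  have hp_pos : 0 < p.toReal := ENNReal.toReal_pos h0 hp
  simp only [eLpNorm_eq_lintegral_rpow_enorm_toReal h0 hp, enorm_eq_self,
    ENNReal.mul_rpow_of_nonneg _ _ hp_pos.le, one_div]
  rw [lintegral_const_mul'' _ (hx.pow_const _), ENNReal.mul_rpow_of_nonneg _ _ (by positivity),
    ENNReal.rpow_rpow_inv hp_pos.ne']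

lemma eLpNorm_tsum_le [Countable ι] {y : ι → α → ℝ≥0∞} (hy : ∀ k, AEMeasurable (y k) μ)
    {s : ℝ≥0∞} (hs : 1 ≤ s) :
    eLpNorm (fun a => ∑' k, y k a) s μ ≤ ∑' k, eLpNorm (y k) s μ := by
  classical
  have hsum : ∀ F : Finset ι, eLpNorm (fun a => ∑ k ∈ F, y k a) s μ ≤ ∑' k, eLpNorm (y k) s μ :=
    fun F => by
      have h := (eLpNorm_sum_le (s := F) (fun k _ => (hy k).aestronglyMeasurable) hs)
      rw [← Finset.sum_fn]
      exact h.trans (ENNReal.sum_le_tsum F)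
  rcases eq_or_ne s ∞ with rfl | hs_top
  · simp only [eLpNorm_exponent_top]
    refine essSup_le_of_ae_le _ ?_
    have hae : ∀ᵐ a ∂μ, ∀ k, y k a ≤ eLpNormEssSup (y k) μ :=
      ae_all_iff.2 fun k => ae_le_eLpNormEssSup (f := y k)
    filter_upwards [hae] with a ha
    exact ENNReal.tsum_le_tsum ha
  have hs_pos : 0 < s.toReal := ENNReal.toReal_pos (zero_lt_one.trans_le hs).ne' hs_top
  have hrpow : ∀ a, (∑' k, y k a) ^ s.toReal = ⨆ F : Finset ι, (∑ k ∈ F, y k a) ^ s.toReal :=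
    fun a => by
      rw [ENNReal.tsum_eq_iSup_sum]
      exact (ENNReal.orderIsoRpow s.toReal hs_pos).map_iSup _
  have hmono : Directed (· ≤ ·) fun (F : Finset ι) a => (∑ k ∈ F, y k a) ^ s.toReal :=
    Monotone.directed_le fun F G hFG a =>
      ENNReal.rpow_le_rpow (Finset.sum_le_sum_of_subset hFG) hs_pos.le
  rw [eLpNorm_eq_lintegral_rpow_enorm_toReal (zero_lt_one.trans_le hs).ne' hs_top, one_div,
    ENNReal.rpow_inv_le_iff hs_pos]
  simp only [enorm_eq_self, hrpow]
  rw [lintegral_iSup_directed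
    (fun F => (Finset.aemeasurable_fun_sum F fun k _ => hy k).pow_const _) hmono]
  refine iSup_le fun F => ?_
  have := hsum F
  rwa [eLpNorm_eq_lintegral_rpow_enorm_toReal (zero_lt_one.trans_le hs).ne' hs_top, one_div,
    ENNReal.rpow_inv_le_iff hs_pos] at this

lemma eLpNorm_count_eq_tsum [MeasurableSpace ι] [MeasurableSingletonClass ι] {p : ℝ≥0∞}
    (h0 : p ≠ 0) (hp : p ≠ ∞) (x : ι → ℝ≥0∞) :
    eLpNorm x p Measure.count = (∑' k, x k ^ p.toReal) ^ p.toReal⁻¹ := by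
  simp [eLpNorm_eq_lintegral_rpow_enorm_toReal h0 hp, lintegral_count]

lemma eLpNorm_eLpNorm_count_le [Countable ι] [MeasurableSpace ι] [MeasurableSingletonClass ι]
    {x : ι → α → ℝ≥0∞} (hx : ∀ k, AEMeasurable (x k) μ) {p r : ℝ≥0∞} (h0 : p ≠ 0) (hp : p ≠ ∞)
    (hpr : p ≤ r) :
    eLpNorm (fun a => eLpNorm (fun k => x k a) p Measure.count) r μ ≤
      eLpNorm (fun k => eLpNorm (x k) r μ) p Measure.count := by
  have hp_pos : 0 < p.toReal := ENNReal.toReal_pos h0 hp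
  have hrp : r / p * ENNReal.ofReal p.toReal = r := by
    rw [ENNReal.ofReal_toReal hp, ENNReal.div_mul_cancel h0 hp]
  have hpow : ∀ y : α → ℝ≥0∞,
      eLpNorm (fun a => y a ^ p.toReal) (r / p) μ = eLpNorm y r μ ^ p.toReal := fun y => by
    simpa [hrp] using eLpNorm_enorm_rpow (p := r / p) (μ := μ) y hp_pos
  rw [eLpNorm_count_eq_tsum h0 hp, ENNReal.le_rpow_inv_iff hp_pos, ← hpow]
  simp only [eLpNorm_count_eq_tsum h0 hp, ENNReal.rpow_inv_rpow hp_pos.ne', ← hpow]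
  exact eLpNorm_tsum_le (fun k => (hx k).pow_const _)
    ((ENNReal.le_div_iff_mul_le (.inl h0) (.inl hp)).2 (by simpa using hpr))

end Lebesgue

/-- The `ℓ_p` quasi-norm of the restriction of a two-sided sequence to `S`. -/
def ellNorm (p : ℝ≥0∞) (S : Set ℤ) (x : ℤ → ℝ≥0∞) : ℝ≥0∞ :=
  eLpNorm x p (Measure.count.restrict S)

section EllNorm

variable {ι : Type*} {p q : ℝ≥0∞} {S T : Set ℤ} {x y : ℤ → ℝ≥0∞}

lemma ellNorm_univ (p : ℝ≥0∞) (x : ℤ → ℝ≥0∞) : ellNorm p univ x = eLpNorm x p Measure.count := by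
  rw [ellNorm, Measure.restrict_univ]

lemma ellNorm_mono (h : ∀ k ∈ S, x k ≤ y k) : ellNorm p S x ≤ ellNorm p S y :=
  eLpNorm_mono_enorm_ae ((ae_restrict_iff' .of_discrete).2 (.of_forall h))

lemma ellNorm_mono_set (h : S ⊆ T) : ellNorm p S x ≤ ellNorm p T x :=
  eLpNorm_mono_measure _ (Measure.restrict_mono_set _ h)

lemma ellNorm_const_mul (c : ℝ≥0∞) (x : ℤ → ℝ≥0∞) :
    ellNorm p S (fun k => c * x k) = c * ellNorm p S x :=
  eLpNorm_const_mul_of_aemeasurable (Measurable.of_discrete).aemeasurable p c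

lemma ellNorm_mul_const (x : ℤ → ℝ≥0∞) (c : ℝ≥0∞) :
    ellNorm p S (fun k => x k * c) = ellNorm p S x * c := by
  simp only [mul_comm _ c, ellNorm_const_mul]

lemma le_ellNorm (h0 : p ≠ 0) {k : ℤ} (hk : k ∈ S) : x k ≤ ellNorm p S x :=
  calc x k = ellNorm p {k} x := by simp [ellNorm, eLpNorm_dirac, h0]
    _ ≤ ellNorm p S x := ellNorm_mono_set (Set.singleton_subset_iff.2 hk)

lemma ellNorm_univ_indicator : ellNorm p univ (S.indicator x) = ellNorm p S x := by
  rw [ellNorm_univ]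
  exact eLpNorm_indicator_eq_eLpNorm_restrict .of_discrete

lemma ellNorm_anti_exponent (h0 : p ≠ 0) (hpq : p ≤ q) : ellNorm q S x ≤ ellNorm p S x := by
  rcases eq_or_ne q ∞ with rfl | hq
  · exact essSup_le_of_ae_le _
      ((ae_restrict_iff' .of_discrete).2 (.of_forall fun k hk => le_ellNorm h0 hk))
  have hp : p ≠ ∞ := ne_top_of_le_ne_top hq hpq
  have hp_pos : 0 < p.toReal := ENNReal.toReal_pos h0 hp
  have hle : 0 ≤ q.toReal - p.toReal := sub_nonneg.2 (ENNReal.toReal_mono hq hpq)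
  have hq0 : q ≠ 0 := (h0.bot_lt.trans_le hpq).ne'
  have hq_pos : 0 < q.toReal := ENNReal.toReal_pos hq0 hq
  have hsplit : ∀ M : ℝ≥0∞, M ^ q.toReal = M ^ (q.toReal - p.toReal) * M ^ p.toReal := fun M => by
    rw [← ENNReal.rpow_add_of_nonneg _ _ hle hp_pos.le, sub_add_cancel]
  have hpow : ∫⁻ k in S, x k ^ p.toReal ∂Measure.count = ellNorm p S x ^ p.toReal := by
    simp [ellNorm, eLpNorm_eq_lintegral_rpow_enorm_toReal h0 hp, ENNReal.rpow_inv_rpow hp_pos.ne']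
  rw [ellNorm, eLpNorm_eq_lintegral_rpow_enorm_toReal hq0 hq, one_div,
    ENNReal.rpow_inv_le_iff hq_pos]
  calc ∫⁻ k in S, x k ^ q.toReal ∂Measure.count
      ≤ ∫⁻ k in S, ellNorm p S x ^ (q.toReal - p.toReal) * x k ^ p.toReal ∂Measure.count :=
        setLIntegral_mono .of_discrete fun k hk => by
          rw [hsplit]
          gcongr
          exact le_ellNorm h0 hk
    _ = ellNorm p S x ^ q.toReal := by
        rw [lintegral_const_mul _ .of_discrete, hpow, ← hsplit]

lemma ellNorm_dominated (p : ℝ≥0∞) {S : ι → Set ℤ} {x y : ι → ℤ → ℝ≥0∞}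
    (h : ∃ C : NNReal, ∀ i, ∀ k ∈ S i, x i k ≤ C * y i k) :
    (fun i => ellNorm p (S i) (x i)) ≼ fun i => ellNorm p (S i) (y i) :=
  h.imp fun _ hC i => (ellNorm_mono (hC i)).trans_eq (ellNorm_const_mul _ _)

lemma ellNorm_mul_dominated (p : ℝ≥0∞) (S : Set ℤ) (x : ℤ → ℝ≥0∞) {y z : ι → ℤ → ℝ≥0∞}
    (h : (fun i : ι × ℤ => y i.1 i.2) ≼ fun i => z i.1 i.2) :
    (fun i => ellNorm p S fun k => x k * y i k) ≼ fun i => ellNorm p S fun k => x k * z i k :=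
  ellNorm_dominated p <| h.imp fun _ hC i k _ =>
    (mul_le_mul_right (hC (i, k)) _).trans_eq (mul_left_comm _ _ _)

lemma ellNorm_add_dominated (p : ℝ≥0∞) (S : ι → Set ℤ) (x y : ι → ℤ → ℝ≥0∞) :
    (fun i => ellNorm p (S i) (fun k => x i k + y i k)) ≼
      fun i => ellNorm p (S i) (x i) + ellNorm p (S i) (y i) := by
  refine ⟨(LpAddConst p).toNNReal, fun i => ?_⟩
  rw [ENNReal.coe_toNNReal (LpAddConst_lt_top p).ne]
  exact eLpNorm_add_le' .of_discrete .of_discrete p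

lemma ellNorm_univ_dominated (p : ℝ≥0∞) {S T : ι → Set ℤ} (hST : ∀ i, S i ∪ T i = univ)
    (x : ι → ℤ → ℝ≥0∞) :
    (fun i => ellNorm p univ (x i)) ≼ fun i => ellNorm p (S i) (x i) + ellNorm p (T i) (x i) := by
  have h := ellNorm_add_dominated p (fun _ => univ) (fun i => (S i).indicator (x i))
    fun i => (T i).indicator (x i)
  simp only [ellNorm_univ_indicator] at h
  refine Dominated.trans (.of_le fun i => ellNorm_mono fun k _ => ?_) h
  rcases (hST i).ge (mem_univ k) with hk | hk
  · simp [hk]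
  · simp [hk]

lemma ellNorm_univ_add_right (p : ℝ≥0∞) (x : ℤ → ℝ≥0∞) (n : ℤ) :
    ellNorm p univ (fun k => x (k + n)) = ellNorm p univ x := by
  rw [ellNorm_univ, ellNorm_univ]
  exact eLpNorm_comp_measurePreserving .of_discrete (measurePreserving_add_right Measure.count n)

lemma ellNorm_comp_dominated (p : ℝ≥0∞) {κ : ℤ → ℤ} {N : ℕ}
    (hκ : ∀ k, (κ ⁻¹' {k}).encard ≤ N) :
    (fun x => ellNorm p univ (x ∘ κ)) ≼ ellNorm p univ := by
  have hmap : Measure.map κ Measure.count ≤ (N : ℝ≥0∞) • Measure.count := by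
    refine Measure.le_iff.2 fun s hs => ?_
    rw [← Measure.tsum_indicator_apply_singleton _ s hs,
      ← Measure.tsum_indicator_apply_singleton _ s hs]
    refine ENNReal.tsum_le_tsum fun k => indicator_le_indicator ?_
    rw [Measure.map_apply .of_discrete .of_discrete, Measure.count_apply .of_discrete]
    simpa using ENat.toENNReal_mono (hκ k)
  refine ⟨((N : ℝ≥0∞) ^ (1 / p).toReal).toNNReal, fun x => ?_⟩
  rw [ENNReal.coe_toNNReal (ENNReal.rpow_ne_top_of_nonneg (by positivity) (by simp)),
    ellNorm_univ p x]
  refine (ellNorm_univ p _).trans_le ?_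
  rw [← eLpNorm_map_measure .of_discrete (by fun_prop)]
  exact eLpNorm_le_of_measure_le_smul hmap

end EllNorm

section Geometric

/-- The geometrically decaying kernel `2 ^ (-δ |m|)`. -/
def geomKernel (δ : ℝ) (m : ℤ) : ℝ≥0∞ := ENNReal.ofReal ((2 : ℝ) ^ (-δ * |(m : ℝ)|))

lemma summable_two_rpow_neg_mul_abs {δ : ℝ} (hδ : 0 < δ) :
    Summable fun m : ℤ => (2 : ℝ) ^ (-δ * |(m : ℝ)|) := by
  have hs : Summable fun n : ℕ => ((2 : ℝ) ^ (-δ)) ^ n :=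
    summable_geometric_of_lt_one (by positivity)
      (Real.rpow_lt_one_of_one_lt_of_neg one_lt_two (neg_lt_zero.2 hδ))
  simp only [← Real.rpow_mul_natCast zero_le_two] at hs
  exact .of_nat_of_neg (by simpa using hs) (by simpa using hs)

lemma ellNorm_geomKernel_ne_top {p : ℝ≥0∞} (h0 : p ≠ 0) (hp : p ≠ ∞) {δ : ℝ} (hδ : 0 < δ) :
    ellNorm p univ (geomKernel δ) ≠ ∞ := by
  have hp_pos : 0 < p.toReal := ENNReal.toReal_pos h0 hp
  have hpow : ∀ m : ℤ,
      geomKernel δ m ^ p.toReal = ENNReal.ofReal (2 ^ (-(δ * p.toReal) * |(m : ℝ)|)) := fun m => by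
    rw [geomKernel, ENNReal.ofReal_rpow_of_pos (by positivity), ← Real.rpow_mul zero_le_two]
    ring_nf
  rw [ellNorm_univ, eLpNorm_count_eq_tsum h0 hp]
  simp only [hpow]
  exact ENNReal.rpow_ne_top_of_nonneg (by positivity)
    (summable_two_rpow_neg_mul_abs (mul_pos hδ hp_pos)).tsum_ofReal_ne_top

lemma ellNorm_geomKernel_mul_dominated {p r : ℝ≥0∞} (h0 : p ≠ 0) (hp : p ≠ ∞) (hpr : p ≤ r)
    {δ : ℝ} (hδ : 0 < δ) :
    (fun x => ellNorm r univ fun j => ellNorm p univ fun k => geomKernel δ (k - j) * x k) ≼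
      ellNorm r univ := by
  refine ⟨(ellNorm p univ (geomKernel δ)).toNNReal, fun x => ?_⟩
  rw [ENNReal.coe_toNNReal (ellNorm_geomKernel_ne_top h0 hp hδ)]
  calc ellNorm r univ (fun j => ellNorm p univ fun k => geomKernel δ (k - j) * x k)
      = ellNorm r univ (fun j => ellNorm p univ fun m => geomKernel δ m * x (m + j)) := by
        congr 1 with j
        rw [← ellNorm_univ_add_right p _ j]
        simp only [add_sub_cancel_right]
    _ ≤ ellNorm p univ fun m => ellNorm r univ fun j => geomKernel δ m * x (m + j) := by
        simp only [ellNorm_univ]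
        exact eLpNorm_eLpNorm_count_le (fun _ => (Measurable.of_discrete).aemeasurable) h0 hp hpr
    _ = ellNorm p univ (geomKernel δ) * ellNorm r univ x := by
        rw [← ellNorm_mul_const]
        congr 1 with m
        simp only [ellNorm_const_mul, add_comm m, ellNorm_univ_add_right]

lemma ellNorm_dominated_of_le_geomKernel {p : ℝ≥0∞} (h0 : p ≠ 0) (hp : p ≠ ∞) {δ : ℝ}
    (hδ : 0 < δ) {S : ℤ → Set ℤ} {x y : ℤ → ℝ≥0∞}
    (h : ∃ C : NNReal, ∀ j, ∀ k ∈ S j, x k ≤ C * (geomKernel δ (k - j) * y j)) :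
    (fun j => ellNorm p (S j) x) ≼ y := by
  refine (ellNorm_dominated p h).trans ⟨(ellNorm p univ (geomKernel δ)).toNNReal, fun j => ?_⟩
  dsimp only
  rw [ENNReal.coe_toNNReal (ellNorm_geomKernel_ne_top h0 hp hδ), ellNorm_mul_const]
  gcongr
  refine (ellNorm_mono_set (subset_univ _)).trans_eq ?_
  exact ellNorm_univ_add_right p (geomKernel δ) (-j)

end Geometric

section MulHaar

/-- The Haar measure `dt / t` of the multiplicative group `(0, ∞)`, encoded as the image of Lebesgue
measure under `Real.exp`. -/
def mulHaar : Measure ℝ := volume.map Real.exp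

lemma ae_mulHaar_pos : ∀ᵐ t ∂mulHaar, 0 < t :=
  (ae_map_iff Real.measurable_exp.aemeasurable measurableSet_Ioi).2 (.of_forall Real.exp_pos)

lemma volume_restrict_Ioi_eq_withDensity :
    volume.restrict (Ioi 0) = mulHaar.withDensity ENNReal.ofReal := by
  refine Measure.ext fun s hs => ?_
  have himage : s ∩ Ioi 0 = Real.exp '' (Real.exp ⁻¹' s) := by
    rw [image_preimage_eq_inter_range, Real.range_exp]
  rw [withDensity_apply _ hs, mulHaar, Measure.restrict_map Real.measurable_exp hs,
    lintegral_map ENNReal.measurable_ofReal Real.measurable_exp, Measure.restrict_apply hs, himage,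
    ← setLIntegral_one, lintegral_image_eq_lintegral_abs_deriv_mul (Real.measurable_exp hs)
      (fun x _ => (Real.hasDerivAt_exp x).hasDerivWithinAt) Real.exp_injective.injOn]
  simp only [abs_of_pos (Real.exp_pos _), mul_one]

lemma volume_restrict_eq_withDensity {S : Set ℝ} (hS : MeasurableSet S) (hS_pos : S ⊆ Ioi 0) :
    volume.restrict S = (mulHaar.restrict S).withDensity ENNReal.ofReal := by
  rw [← restrict_withDensity hS, ← volume_restrict_Ioi_eq_withDensity,
    Measure.restrict_restrict hS, inter_eq_self_of_subset_left hS_pos]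

lemma LqNorm_eq_eLpNorm {q : ℝ≥0∞} (h0 : q ≠ 0) {S : Set ℝ} (hS : MeasurableSet S)
    (hS_pos : S ⊆ Ioi 0) {g F : ℝ → ℝ≥0∞}
    (hgF : ∀ u ∈ S, g u = ENNReal.ofReal (u ^ (-q⁻¹.toReal)) * F u) :
    LqNorm q S g = eLpNorm F q (mulHaar.restrict S) := by
  have hvol := volume_restrict_eq_withDensity hS hS_pos
  rcases eq_or_ne q ∞ with rfl | hq
  · have hgF' : g =ᵐ[volume.restrict S] F :=
      (ae_restrict_mem hS).mono fun u hu => by simpa using hgF u hu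
    have hpos : ∀ᵐ u ∂mulHaar.restrict S, ENNReal.ofReal u ≠ 0 :=
      (ae_restrict_of_ae ae_mulHaar_pos).mono fun u hu => by simpa using hu
    rw [LqNorm, if_pos rfl, essSup_congr_ae hgF', hvol]
    exact le_antisymm (essSup_mono_measure (withDensity_absolutelyContinuous _ _))
      (essSup_mono_measure
        (withDensity_absolutelyContinuous' ENNReal.measurable_ofReal.aemeasurable hpos))
  · have hq_pos : 0 < q.toReal := ENNReal.toReal_pos h0 hq
    have hpow : ∀ u ∈ S, ENNReal.ofReal u * g u ^ q.toReal = F u ^ q.toReal := fun u hu => by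
      have hu_pos : 0 < u := hS_pos hu
      rw [hgF u hu, ENNReal.mul_rpow_of_nonneg _ _ hq_pos.le,
        ENNReal.ofReal_rpow_of_pos (by positivity), ← Real.rpow_mul hu_pos.le, ENNReal.toReal_inv,
        neg_mul, inv_mul_cancel₀ hq_pos.ne', Real.rpow_neg_one, ← mul_assoc,
        ← ENNReal.ofReal_mul hu_pos.le, mul_inv_cancel₀ hu_pos.ne', ENNReal.ofReal_one, one_mul]
    rw [LqNorm, if_neg hq, eLpNorm_eq_lintegral_rpow_enorm_toReal h0 hq, hvol,
      lintegral_withDensity_eq_lintegral_mul_non_measurable _ ENNReal.measurable_ofReal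
        (.of_forall fun _ => ENNReal.ofReal_lt_top), ENNReal.toReal_inv, one_div]
    exact congrArg (· ^ _) (setLIntegral_congr_fun hS hpow)

lemma eLpNorm_comp_const_mul_mulHaar (F : ℝ → ℝ≥0∞) (q : ℝ≥0∞) {c : ℝ} (hc : 0 < c) (S : Set ℝ) :
    eLpNorm (fun u => F (c * u)) q (mulHaar.restrict ((c * ·) ⁻¹' S)) =
      eLpNorm F q (mulHaar.restrict S) := by
  have hemb : MeasurableEmbedding fun u : ℝ => c * u := measurableEmbedding_mulLeft₀ hc.ne'
  have hexp : (fun u => c * u) ∘ Real.exp = Real.exp ∘ fun x => Real.log c + x := by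
    funext x
    simp [Real.exp_add, Real.exp_log hc]
  have hmap : mulHaar.map (fun u => c * u) = mulHaar := by
    rw [mulHaar, Measure.map_map hemb.measurable Real.measurable_exp, hexp,
      ← Measure.map_map Real.measurable_exp (measurable_const_add _), map_add_left_eq_self]
  conv_rhs => rw [← hmap]
  rw [hemb.restrict_map, hemb.eLpNorm_map_measure]
  rfl

lemma eLpNorm_mulHaar_restrict_le_of_comp_mul_le {F : ℝ → ℝ≥0∞} {c : ℝ} (hc : 0 < c) {M : NNReal}
    (hF : ∀ u, 0 < u → F (c * u) ≤ M * F u) (q : ℝ≥0∞) (S : Set ℝ) :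
    eLpNorm F q (mulHaar.restrict S) ≤ M * eLpNorm F q (mulHaar.restrict ((c * ·) ⁻¹' S)) := by
  rw [← eLpNorm_comp_const_mul_mulHaar F q hc S]
  exact eLpNorm_le_mul_eLpNorm_of_ae_le_mul'
    ((ae_restrict_of_ae ae_mulHaar_pos).mono hF) q

end MulHaar

section Discretisation

variable {ι κ : Type*}

/-- The index `k` of the dyadic interval `[2 ^ k, 2 ^ (k + 1))` that contains `t > 0`. -/
def dyadicLevel (t : ℝ) : ℤ := ⌊Real.logb 2 t⌋

lemma measurable_dyadicLevel : Measurable dyadicLevel :=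
  Int.measurable_floor.comp (Real.measurable_log.div_const _)

lemma le_dyadicLevel_iff {k : ℤ} {t : ℝ} (ht : 0 < t) : k ≤ dyadicLevel t ↔ (2 : ℝ) ^ k ≤ t := by
  rw [dyadicLevel, Int.le_floor, Real.le_logb_iff_rpow_le one_lt_two ht, Real.rpow_intCast]

lemma dyadicLevel_lt_iff {k : ℤ} {t : ℝ} (ht : 0 < t) : dyadicLevel t < k ↔ t < (2 : ℝ) ^ k := by
  rw [← not_le, le_dyadicLevel_iff ht, not_le]

lemma two_zpow_dyadicLevel_le {t : ℝ} (ht : 0 < t) : (2 : ℝ) ^ dyadicLevel t ≤ t :=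
  (le_dyadicLevel_iff ht).1 le_rfl

lemma lt_two_mul_two_zpow_dyadicLevel {t : ℝ} (ht : 0 < t) : t < 2 * (2 : ℝ) ^ dyadicLevel t := by
  rw [← zpow_one_add₀ two_ne_zero, ← dyadicLevel_lt_iff ht]
  exact lt_one_add _

lemma map_dyadicLevel_mulHaar :
    mulHaar.map dyadicLevel = ENNReal.ofReal (Real.log 2) • Measure.count := by
  have hlog : 0 < Real.log 2 := Real.log_pos one_lt_two
  refine Measure.ext_of_singleton fun k => ?_
  have hpre : Real.exp ⁻¹' (dyadicLevel ⁻¹' {k}) =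
      Ico (k * Real.log 2) ((k + 1) * Real.log 2) := by
    ext x
    simp [dyadicLevel, Int.floor_eq_iff, Real.logb, le_div_iff₀ hlog, div_lt_iff₀ hlog]
  rw [Measure.map_apply measurable_dyadicLevel (measurableSet_singleton k), mulHaar,
    Measure.map_apply Real.measurable_exp (measurable_dyadicLevel (measurableSet_singleton k)),
    hpre, Real.volume_Ico]
  simp [add_mul]

lemma abs_log_two_zpow_dyadicLevel_sub_log_le {t : ℝ} (ht : 0 < t) :
    |Real.log (2 ^ dyadicLevel t) - Real.log t| ≤ 1 := by
  have hle := Real.log_le_log (by positivity) (two_zpow_dyadicLevel_le ht)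
  have hlt := Real.log_le_log ht (lt_two_mul_two_zpow_dyadicLevel ht).le
  rw [Real.log_mul two_ne_zero (by positivity)] at hlt
  rw [abs_le]
  constructor <;> linarith [Real.log_two_lt_d9]

/-- A family of functions on `(0, ∞)` is moderate if `F i s` and `F i t` differ at most by a factor
that is a power of `max (s / t) (t / s)`, uniformly in `i`. The norms of such functions can be
computed from their values at the points `2 ^ k`. -/
def Moderate (F : ι → ℝ → ℝ≥0∞) : Prop :=
  ∃ C, 0 ≤ C ∧ ∀ i s t, 0 < s → 0 < t →
    F i s ≤ ENNReal.ofReal (Real.exp (C * (1 + |Real.log s - Real.log t|))) * F i t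

lemma Moderate.mul {F G : ι → ℝ → ℝ≥0∞} (hF : Moderate F) (hG : Moderate G) :
    Moderate fun i t => F i t * G i t := by
  obtain ⟨C, hC0, hC⟩ := hF
  obtain ⟨D, hD0, hD⟩ := hG
  refine ⟨C + D, add_nonneg hC0 hD0, fun i s t hs ht =>
    (mul_le_mul' (hC i s t hs ht) (hD i s t hs ht)).trans_eq ?_⟩
  rw [add_mul, Real.exp_add, ENNReal.ofReal_mul (Real.exp_nonneg _)]
  ring

lemma Moderate.comp {F : ι → ℝ → ℝ≥0∞} (hF : Moderate F) (φ : κ → ι) :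
    Moderate fun k => F (φ k) :=
  hF.imp fun _ hC => ⟨hC.1, fun k => hC.2 (φ k)⟩

lemma eLpNorm_comp_dyadicLevel (q : ℝ≥0∞) (S : Set ℤ) (x : ℤ → ℝ≥0∞) :
    eLpNorm (fun t => x (dyadicLevel t)) q (mulHaar.restrict (dyadicLevel ⁻¹' S)) =
      ENNReal.ofReal (Real.log 2) ^ (1 / q).toReal * ellNorm q S x := by
  have hlog : ENNReal.ofReal (Real.log 2) ≠ 0 := by simpa using Real.log_pos one_lt_two
  have h := eLpNorm_map_measure (p := q) (g := x) (f := dyadicLevel)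
    (μ := mulHaar.restrict (dyadicLevel ⁻¹' S)) .of_discrete measurable_dyadicLevel.aemeasurable
  rw [← Measure.restrict_map measurable_dyadicLevel .of_discrete, map_dyadicLevel_mulHaar,
    Measure.restrict_smul, eLpNorm_smul_measure_of_ne_zero hlog] at h
  exact h.symm

lemma Moderate.exists_le_of_abs_log_sub_log_le {F : ι → ℝ → ℝ≥0∞} (hF : Moderate F) (D : ℝ) :
    ∃ C : NNReal, ∀ i s t, 0 < s → 0 < t → |Real.log s - Real.log t| ≤ D → F i s ≤ C * F i t := by
  obtain ⟨C, hC0, hC⟩ := hF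
  refine ⟨(Real.exp (C * (1 + D))).toNNReal, fun i s t hs ht hst => (hC i s t hs ht).trans ?_⟩
  change _ ≤ ENNReal.ofReal _ * _
  gcongr

lemma Moderate.comparable_eLpNorm {F : ι → ℝ → ℝ≥0∞} (hF : Moderate F) (q : ℝ≥0∞)
    (S : ι → Set ℤ) :
    Comparable (fun i => eLpNorm (F i) q (mulHaar.restrict (dyadicLevel ⁻¹' S i)))
      fun i => ellNorm q (S i) fun k => F i (2 ^ k) := by
  obtain ⟨C, hC⟩ := hF.exists_le_of_abs_log_sub_log_le 1
  set c : ℝ≥0∞ := ENNReal.ofReal (Real.log 2) ^ (1 / q).toReal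
  have hc0 : c ≠ 0 := (ENNReal.rpow_pos (by simpa using Real.log_pos one_lt_two) (by simp)).ne'
  have hc : c ≠ ∞ := ENNReal.rpow_ne_top_of_nonneg (by positivity) (by simp)
  have hstep : ∀ i, eLpNorm (fun t => F i (2 ^ dyadicLevel t)) q
      (mulHaar.restrict (dyadicLevel ⁻¹' S i)) = c * ellNorm q (S i) fun k => F i (2 ^ k) :=
    fun i => eLpNorm_comp_dyadicLevel q (S i) fun k => F i (2 ^ k)
  have hae : ∀ i, ∀ᵐ t ∂mulHaar.restrict (dyadicLevel ⁻¹' S i),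
      F i (2 ^ dyadicLevel t) ≤ C * F i t ∧ F i t ≤ C * F i (2 ^ dyadicLevel t) := fun i =>
    (ae_restrict_of_ae ae_mulHaar_pos).mono fun t ht =>
      have hlog := abs_log_two_zpow_dyadicLevel_sub_log_le ht
      ⟨hC i _ t (by positivity) ht hlog,
        hC i t _ ht (by positivity) (by rwa [abs_sub_comm])⟩
  constructor
  · refine ⟨C * c.toNNReal, fun i => ?_⟩
    rw [ENNReal.coe_mul, ENNReal.coe_toNNReal hc, mul_assoc, ← hstep]
    exact eLpNorm_le_mul_eLpNorm_of_ae_le_mul' ((hae i).mono fun t ht => ht.2) q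
  · refine ⟨c.toNNReal⁻¹ * C, fun i => ?_⟩
    rw [ENNReal.coe_mul, ENNReal.coe_inv (ENNReal.toNNReal_ne_zero.2 ⟨hc0, hc⟩),
      ENNReal.coe_toNNReal hc, mul_assoc, ← ENNReal.mul_le_iff_le_inv hc0 hc, ← hstep]
    exact eLpNorm_le_mul_eLpNorm_of_ae_le_mul' ((hae i).mono fun t ht => ht.1) q

lemma Moderate.eLpNorm_Ioi {F : ι → ℝ → ℝ≥0∞} (hF : Moderate F) (q : ℝ≥0∞) :
    Moderate fun i t => eLpNorm (F i) q (mulHaar.restrict (Ioi t)) := by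
  obtain ⟨C, hC0, hC⟩ := hF
  refine ⟨C, hC0, fun i s t hs ht => ?_⟩
  have hst : 0 < s / t := by positivity
  have hpre : (s / t * ·) ⁻¹' Ioi s = Ioi t := by
    rw [preimage_const_mul_Ioi₀ _ hst, div_div_cancel₀ hs.ne']
  have h := eLpNorm_mulHaar_restrict_le_of_comp_mul_le
    (M := (Real.exp (C * (1 + |Real.log s - Real.log t|))).toNNReal) hst (fun u hu => by
      have hu' := hC i _ u (mul_pos hst hu) hu
      rwa [Real.log_mul hst.ne' hu.ne', Real.log_div hs.ne' ht.ne', add_sub_cancel_right] at hu')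
    q (Ioi s)
  rwa [hpre] at h

lemma mulHaar_restrict_dyadicLevel_Ici (k : ℤ) :
    mulHaar.restrict (dyadicLevel ⁻¹' Ici k) = mulHaar.restrict (Ioi (2 ^ k)) := by
  have hnull : mulHaar {(2 : ℝ) ^ k} = 0 := by
    have hpre : Real.exp ⁻¹' {(2 : ℝ) ^ k} = {Real.log (2 ^ k)} := by
      ext x
      exact ⟨fun hx => by rw [mem_singleton_iff, ← mem_singleton_iff.1 hx, Real.log_exp],
        fun hx => by rw [mem_preimage, mem_singleton_iff.1 hx, Real.exp_log (by positivity)]; rfl⟩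
    rw [mulHaar, Measure.map_apply Real.measurable_exp (measurableSet_singleton _), hpre,
      Real.volume_singleton]
  refine Measure.restrict_congr_set ?_
  filter_upwards [ae_mulHaar_pos, compl_mem_ae_iff.2 hnull] with t ht htk
  exact propext ((le_dyadicLevel_iff ht).trans (Ne.symm htk).le_iff_lt)

lemma mulHaar_restrict_dyadicLevel_Iio (k : ℤ) :
    mulHaar.restrict (dyadicLevel ⁻¹' Iio k) = mulHaar.restrict (Ioo 0 (2 ^ k)) := by
  refine Measure.restrict_congr_set ?_
  filter_upwards [ae_mulHaar_pos] with t ht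
  exact propext ((dyadicLevel_lt_iff ht).trans (iff_and_self.2 fun _ => ht))

lemma mulHaar_restrict_Ioi_zero : mulHaar.restrict (Ioi 0) = mulHaar :=
  Measure.restrict_eq_self_of_ae_mem ae_mulHaar_pos

end Discretisation

/-- `b` varies regularly with index `σ` on `(0, ∞)`, in the sense of Potter's bounds: up to a factor
`max (s / t) (t / s) ^ ε`, with `ε > 0` arbitrary, `b s / b t` behaves like `(s / t) ^ σ`. Taking
logarithms makes the stability under products, powers and composition a matter of linear
arithmetic. -/
structure RegularlyVarying (σ : ℝ) (b : ℝ → ℝ) : Prop where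
  pos : ∀ t, 0 < t → 0 < b t
  potter : ∀ ε, 0 < ε → ∃ C, ∀ s t, 0 < s → 0 < t →
    |Real.log (b s) - Real.log (b t) - σ * (Real.log s - Real.log t)| ≤
      C + ε * |Real.log s - Real.log t|

lemma EquivOn.exists_log_le {S : Set ℝ} {f g : ℝ → ℝ} (hfg : EquivOn S f g)
    (hf : ∀ t ∈ S, 0 < f t) :
    ∃ C, ∀ s ∈ S, ∀ t ∈ S, g s ≤ g t → Real.log (f s) ≤ C + Real.log (f t) := by
  obtain ⟨C, hC, hCfg⟩ := hfg
  refine ⟨Real.log (C * C), fun s hs t ht hst => ?_⟩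
  rw [← Real.log_mul (by positivity) (hf t ht).ne']
  refine Real.log_le_log (hf s hs) ?_
  calc f s ≤ C * g t := (hCfg s hs).2.trans (by gcongr)
    _ ≤ C * (C * f t) := by
        gcongr
        exact (inv_mul_le_iff₀ hC).1 (hCfg t ht).1
    _ = C * C * f t := by ring

lemma SlowlyVarying.regularlyVarying {b : ℝ → ℝ} (hb : SlowlyVarying b) : RegularlyVarying 0 b where
  pos := hb.2.1
  potter ε hε := by
    obtain ⟨⟨g, hg, hbg⟩, ⟨h, hh, hbh⟩⟩ := hb.2.2 ε hε
    have hlog : ∀ x t : ℝ, 0 < t → Real.log (t ^ x * b t) = x * Real.log t + Real.log (b t) :=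
      fun x t ht => by
        rw [Real.log_mul (by positivity) (hb.2.1 t ht).ne', Real.log_rpow ht]
    have hpos : ∀ x : ℝ, ∀ t ∈ Ioi (0 : ℝ), 0 < t ^ x * b t := fun x t ht =>
      mul_pos (Real.rpow_pos_of_pos ht x) (hb.2.1 t ht)
    obtain ⟨C, hC⟩ := hbg.exists_log_le (hpos ε)
    obtain ⟨D, hD⟩ := hbh.exists_log_le (hpos (-ε))
    have hle : ∀ s t, 0 < s → s ≤ t →
        |Real.log (b s) - Real.log (b t)| ≤ max C D + ε * |Real.log s - Real.log t| :=
      fun s t hs hst => by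
        have ht := hs.trans_le hst
        have hCst := hC s hs t ht (hg hs ht hst)
        have hDst := hD t ht s hs (hh hs ht hst)
        rw [hlog _ _ hs, hlog _ _ ht] at hCst hDst
        rw [abs_of_nonpos (sub_nonpos.2 (Real.log_le_log hs hst)), abs_le]
        constructor <;> linarith [le_max_left C D, le_max_right C D]
    refine ⟨max C D, fun s t hs ht => ?_⟩
    rw [zero_mul, sub_zero]
    rcases le_total s t with hst | hts
    · exact hle s t hs hst
    · rw [abs_sub_comm, abs_sub_comm (Real.log s)]
      exact hle t s ht hts

namespace RegularlyVarying

variable {σ τ : ℝ} {b c : ℝ → ℝ}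

lemma rpow_id (σ : ℝ) : RegularlyVarying σ fun t => t ^ σ where
  pos t ht := by positivity
  potter ε hε := ⟨0, fun s t hs ht => by
    rw [Real.log_rpow hs, Real.log_rpow ht, ← mul_sub, sub_self, abs_zero]
    positivity⟩

lemma id : RegularlyVarying 1 fun t => t := by
  simpa only [Real.rpow_one] using rpow_id 1

lemma mul (hb : RegularlyVarying σ b) (hc : RegularlyVarying τ c) :
    RegularlyVarying (σ + τ) fun t => b t * c t where
  pos t ht := mul_pos (hb.pos t ht) (hc.pos t ht)
  potter ε hε := by
    obtain ⟨C, hC⟩ := hb.potter (ε / 2) (half_pos hε)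
    obtain ⟨D, hD⟩ := hc.potter (ε / 2) (half_pos hε)
    refine ⟨C + D, fun s t hs ht => ?_⟩
    rw [Real.log_mul (hb.pos s hs).ne' (hc.pos s hs).ne',
      Real.log_mul (hb.pos t ht).ne' (hc.pos t ht).ne']
    calc |_| = |(Real.log (b s) - Real.log (b t) - σ * (Real.log s - Real.log t)) +
            (Real.log (c s) - Real.log (c t) - τ * (Real.log s - Real.log t))| := by
          congr 1
          ring
      _ ≤ C + D + ε * |Real.log s - Real.log t| := by
          linarith [hC s t hs ht, hD s t hs ht,
            abs_add_le (Real.log (b s) - Real.log (b t) - σ * (Real.log s - Real.log t))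
              (Real.log (c s) - Real.log (c t) - τ * (Real.log s - Real.log t))]

lemma rpow (hb : RegularlyVarying σ b) (x : ℝ) : RegularlyVarying (x * σ) fun t => b t ^ x where
  pos t ht := Real.rpow_pos_of_pos (hb.pos t ht) x
  potter ε hε := by
    have hx : 0 < |x| + 1 := by positivity
    obtain ⟨C, hC⟩ := hb.potter (ε / (|x| + 1)) (div_pos hε hx)
    refine ⟨|x| * C, fun s t hs ht => ?_⟩
    have hεx : |x| * (ε / (|x| + 1)) ≤ ε := by
      rw [mul_div_assoc', div_le_iff₀ hx]
      nlinarith [abs_nonneg x]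
    rw [Real.log_rpow (hb.pos s hs), Real.log_rpow (hb.pos t ht), mul_assoc x, ← mul_sub, ← mul_sub,
      abs_mul]
    calc |x| * |_| ≤ |x| * (C + ε / (|x| + 1) * |Real.log s - Real.log t|) := by
          gcongr
          exact hC s t hs ht
      _ ≤ |x| * C + ε * |Real.log s - Real.log t| := by
          rw [mul_add, ← mul_assoc]
          gcongr

lemma inv (hb : RegularlyVarying σ b) : RegularlyVarying (-σ) fun t => (b t)⁻¹ := by
  simpa only [neg_one_mul, Real.rpow_neg_one] using hb.rpow (-1)

lemma div (hb : RegularlyVarying σ b) (hc : RegularlyVarying τ c) :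
    RegularlyVarying (σ - τ) fun t => b t / c t := by
  simpa only [div_eq_mul_inv, sub_eq_add_neg] using hb.mul hc.inv

lemma comp (hb : RegularlyVarying σ b) (hc : RegularlyVarying τ c) :
    RegularlyVarying (σ * τ) fun t => b (c t) where
  pos t ht := hb.pos _ (hc.pos t ht)
  potter ε hε := by
    obtain ⟨e₁, he₁, hτ⟩ : ∃ e > 0, e * |τ| ≤ ε / 2 :=
      ⟨ε / 2 / (|τ| + 1), by positivity, by
        rw [div_mul_eq_mul_div, div_le_iff₀ (by positivity)]
        nlinarith [abs_nonneg τ]⟩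
    obtain ⟨e₂, he₂, hσ⟩ : ∃ e > 0, (e₁ + |σ|) * e = ε / 2 :=
      ⟨ε / 2 / (e₁ + |σ|), by positivity, mul_div_cancel₀ _ (by positivity)⟩
    obtain ⟨C, hC⟩ := hb.potter e₁ he₁
    obtain ⟨D, hD⟩ := hc.potter e₂ he₂
    refine ⟨C + (e₁ + |σ|) * D, fun s t hs ht => ?_⟩
    have hCst := hC _ _ (hc.pos s hs) (hc.pos t ht)
    have hDst := hD s t hs ht
    generalize Real.log (b (c s)) - Real.log (b (c t)) = y at hCst ⊢
    generalize Real.log (c s) - Real.log (c t) = x at hCst hDst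
    generalize Real.log s - Real.log t = d at hDst ⊢
    have hx : |x| ≤ |τ| * |d| + |x - τ * d| := by
      simpa [abs_mul] using abs_add_le (τ * d) (x - τ * d)
    calc |y - σ * τ * d| = |(y - σ * x) + σ * (x - τ * d)| := by
          congr 1
          ring
      _ ≤ (C + e₁ * |x|) + |σ| * |x - τ * d| := by
          rw [← abs_mul]
          exact (abs_add_le _ _).trans (by gcongr)
      _ ≤ C + e₁ * |τ| * |d| + (e₁ + |σ|) * |x - τ * d| := by nlinarith
      _ ≤ C + ε / 2 * |d| + (e₁ + |σ|) * (D + e₂ * |d|) := by gcongr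
      _ = C + (e₁ + |σ|) * D + ε * |d| := by linear_combination |d| * hσ

lemma moderate {ι : Type*} (hb : RegularlyVarying σ b) :
    Moderate fun (_ : ι) t => ENNReal.ofReal (b t) := by
  obtain ⟨C, hC⟩ := hb.potter 1 one_pos
  refine ⟨|C| + |σ| + 1, by positivity, fun _ s t hs ht => ?_⟩
  dsimp only
  rw [← ENNReal.ofReal_mul (Real.exp_nonneg _), ← Real.exp_log (hb.pos s hs),
    ← Real.exp_log (hb.pos t ht), ← Real.exp_add]
  refine ENNReal.ofReal_le_ofReal (Real.exp_le_exp.2 ?_)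
  have hst := (abs_le.1 (hC s t hs ht)).2
  have hσ : σ * (Real.log s - Real.log t) ≤ |σ| * |Real.log s - Real.log t| :=
    (le_abs_self _).trans_eq (abs_mul _ _)
  nlinarith [le_abs_self C, abs_nonneg C, abs_nonneg σ, abs_nonneg (Real.log s - Real.log t)]

end RegularlyVarying

/-- The value of a weight at the point `2 ^ k`. -/
def dyadic (b : ℝ → ℝ) (k : ℤ) : ℝ≥0∞ := ENNReal.ofReal (b (2 ^ k))

namespace RegularlyVarying

variable {σ : ℝ} {b : ℝ → ℝ}

lemma dyadic_ne_zero (hb : RegularlyVarying σ b) (k : ℤ) : dyadic b k ≠ 0 := by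
  simpa [dyadic] using hb.pos _ (by positivity)

lemma dyadic_mul (hb : RegularlyVarying σ b) (c : ℝ → ℝ) (k : ℤ) :
    dyadic (fun t => b t * c t) k = dyadic b k * dyadic c k :=
  ENNReal.ofReal_mul (hb.pos _ (by positivity)).le

lemma exists_dyadic_le (hb : RegularlyVarying σ b) {ε : ℝ} (hε : 0 < ε) :
    ∃ C : NNReal, ∀ (δ : ℝ) (j k : ℤ), σ * (k - j) + ε * |(k - j : ℝ)| ≤ -δ * |(k - j : ℝ)| →
      dyadic b k ≤ C * (geomKernel δ (k - j) * dyadic b j) := by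
  obtain ⟨C, hC⟩ := hb.potter ε hε
  refine ⟨(Real.exp C).toNNReal, fun δ j k hjk => ?_⟩
  have hbk : 0 < b (2 ^ k) := hb.pos _ (by positivity)
  have hbj : 0 < b (2 ^ j) := hb.pos _ (by positivity)
  have hlog : Real.log (2 ^ k) - Real.log (2 ^ j) = (k - j) * Real.log 2 := by
    simp only [Real.log_zpow]
    ring
  have h := (abs_le.1 (hC (2 ^ k) (2 ^ j) (by positivity) (by positivity))).2
  have hlog2 : 0 < Real.log 2 := Real.log_pos one_lt_two
  rw [hlog, abs_mul, abs_of_pos hlog2] at h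
  change _ ≤ ENNReal.ofReal (Real.exp C) * _
  rw [dyadic, dyadic, geomKernel, ← ENNReal.ofReal_mul (by positivity),
    ← ENNReal.ofReal_mul (by positivity), Real.rpow_def_of_pos two_pos, ← Real.exp_log hbk,
    ← Real.exp_log hbj, ← Real.exp_add, ← Real.exp_add]
  refine ENNReal.ofReal_le_ofReal (Real.exp_le_exp.2 ?_)
  push_cast
  nlinarith

lemma exists_dyadic_le_of_le (hb : RegularlyVarying σ b) {δ : ℝ} (hδ : δ < σ) :
    ∃ C : NNReal, ∀ j k : ℤ, k ≤ j → dyadic b k ≤ C * (geomKernel δ (k - j) * dyadic b j) := by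
  obtain ⟨C, hC⟩ := hb.exists_dyadic_le (sub_pos.2 hδ)
  refine ⟨C, fun j k hkj => hC δ j k ?_⟩
  have : (k : ℝ) ≤ j := by exact_mod_cast hkj
  rw [abs_of_nonpos (sub_nonpos.2 this)]
  linarith

lemma exists_dyadic_le_of_ge (hb : RegularlyVarying σ b) {δ : ℝ} (hδ : δ < -σ) :
    ∃ C : NNReal, ∀ j k : ℤ, j ≤ k → dyadic b k ≤ C * (geomKernel δ (k - j) * dyadic b j) := by
  obtain ⟨C, hC⟩ := hb.exists_dyadic_le (sub_pos.2 hδ)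
  refine ⟨C, fun j k hkj => hC δ j k ?_⟩
  have : (j : ℝ) ≤ k := by exact_mod_cast hkj
  rw [abs_of_nonneg (sub_nonneg.2 this)]
  linarith

lemma ellNorm_Iic_dominated (hb : RegularlyVarying σ b) (hσ : 0 < σ) {p : ℝ≥0∞} (h0 : p ≠ 0)
    (hp : p ≠ ∞) : (fun j => ellNorm p (Iic j) (dyadic b)) ≼ dyadic b := by
  obtain ⟨C, hC⟩ := hb.exists_dyadic_le_of_le (half_lt_self hσ)
  exact ellNorm_dominated_of_le_geomKernel h0 hp (half_pos hσ) ⟨C, hC⟩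

lemma ellNorm_Ici_dominated (hb : RegularlyVarying σ b) (hσ : σ < 0) {p : ℝ≥0∞} (h0 : p ≠ 0)
    (hp : p ≠ ∞) : (fun j => ellNorm p (Ici j) (dyadic b)) ≼ dyadic b := by
  obtain ⟨C, hC⟩ := hb.exists_dyadic_le_of_ge (half_lt_self (neg_pos.2 hσ))
  exact ellNorm_dominated_of_le_geomKernel h0 hp (half_pos (neg_pos.2 hσ)) ⟨C, hC⟩

end RegularlyVarying

section PartialNorm

/-- The function `t ↦ ‖s ^ (-1/r) β(s)‖_{r,(0,t)}`. -/
def partialNorm (r : ℝ≥0∞) (β : ℝ → ℝ) (t : ℝ) : ℝ≥0∞ := LqNorm r (Ioo 0 t) (svWgt r β)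

variable {σ : ℝ} {r : ℝ≥0∞} {β : ℝ → ℝ}

lemma partialNorm_eq_eLpNorm (h0 : r ≠ 0) (β : ℝ → ℝ) (t : ℝ) :
    partialNorm r β t =
      eLpNorm (fun u => ENNReal.ofReal (β u)) r (mulHaar.restrict (Ioo 0 t)) :=
  LqNorm_eq_eLpNorm h0 measurableSet_Ioo Ioo_subset_Ioi_self fun _ hu =>
    ENNReal.ofReal_mul (Real.rpow_nonneg hu.1.le _)

lemma RegularlyVarying.exists_partialNorm_le (hβ : RegularlyVarying σ β) (h0 : r ≠ 0) {ε : ℝ}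
    (hε : 0 < ε) : ∃ C, ∀ s t, 0 < s → 0 < t → partialNorm r β s ≤
      ENNReal.ofReal (Real.exp
        (C + σ * (Real.log s - Real.log t) + ε * |Real.log s - Real.log t|)) *
        partialNorm r β t := by
  obtain ⟨C, hC⟩ := hβ.potter ε hε
  refine ⟨C, fun s t hs ht => ?_⟩
  have hst : 0 < s / t := by positivity
  have hpre : (s / t * ·) ⁻¹' Ioo 0 s = Ioo 0 t := by
    rw [preimage_const_mul_Ioo₀ _ _ hst, zero_div, div_div_cancel₀ hs.ne']
  rw [partialNorm_eq_eLpNorm h0, partialNorm_eq_eLpNorm h0, ← hpre]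
  refine eLpNorm_mulHaar_restrict_le_of_comp_mul_le
    (M := (Real.exp (C + σ * (Real.log s - Real.log t)
      + ε * |Real.log s - Real.log t|)).toNNReal) hst (fun u hu => ?_) r (Ioo 0 s)
  have h := (abs_le.1 (hC (s / t * u) u (mul_pos hst hu) hu)).2
  rw [Real.log_mul hst.ne' hu.ne', Real.log_div hs.ne' ht.ne', add_sub_cancel_right] at h
  change _ ≤ ENNReal.ofReal _ * _
  rw [← ENNReal.ofReal_mul (Real.exp_nonneg _), ← Real.exp_log (hβ.pos _ (mul_pos hst hu)),
    ← Real.exp_log (hβ.pos _ hu), ← Real.exp_add]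
  exact ENNReal.ofReal_le_ofReal (Real.exp_le_exp.2 (by linarith))

lemma RegularlyVarying.comparable_partialNorm (hβ : RegularlyVarying σ β) (h0 : r ≠ 0) :
    Comparable (fun j : ℤ => partialNorm r β (2 ^ j)) fun j => ellNorm r (Iio j) (dyadic β) := by
  have h := hβ.moderate.comparable_eLpNorm r (Iio : ℤ → Set ℤ)
  simp only [mulHaar_restrict_dyadicLevel_Iio, ← partialNorm_eq_eLpNorm h0] at h
  exact h

lemma RegularlyVarying.partialNorm_ne_zero (hβ : RegularlyVarying σ β) (h0 : r ≠ 0) {t : ℝ}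
    (ht : 0 < t) : partialNorm r β t ≠ 0 := fun h => by
  obtain ⟨C, hC⟩ := hβ.exists_partialNorm_le h0 one_pos
  obtain ⟨D, hD⟩ := (hβ.comparable_partialNorm h0).2
  have hzero : partialNorm r β (2 ^ (0 : ℤ)) = 0 := by
    simpa [h] using hC (2 ^ (0 : ℤ)) t (by positivity) ht
  have hle : dyadic β (-1) ≤ D * partialNorm r β (2 ^ (0 : ℤ)) :=
    (le_ellNorm h0 (mem_Iio.2 neg_one_lt_zero)).trans (hD 0)
  rw [hzero, mul_zero, nonpos_iff_eq_zero] at hle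
  exact hβ.dyadic_ne_zero _ hle

lemma RegularlyVarying.partialNorm_ne_top (hβ : RegularlyVarying σ β) (h0 : r ≠ 0)
    (hfin : partialNorm r β 1 ≠ ∞) {t : ℝ} (ht : 0 < t) : partialNorm r β t ≠ ∞ := by
  obtain ⟨C, hC⟩ := hβ.exists_partialNorm_le h0 one_pos
  exact ne_top_of_le_ne_top (ENNReal.mul_ne_top ENNReal.ofReal_ne_top hfin) (hC t 1 ht one_pos)

lemma RegularlyVarying.partialNorm_toReal (hβ : RegularlyVarying σ β) (h0 : r ≠ 0)
    (hfin : partialNorm r β 1 ≠ ∞) :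
    RegularlyVarying σ fun t => (partialNorm r β t).toReal where
  pos t ht := ENNReal.toReal_pos (hβ.partialNorm_ne_zero h0 ht) (hβ.partialNorm_ne_top h0 hfin ht)
  potter ε hε := by
    obtain ⟨C, hC⟩ := hβ.exists_partialNorm_le h0 hε
    have hle : ∀ s t, 0 < s → 0 < t → Real.log (partialNorm r β s).toReal ≤
        C + σ * (Real.log s - Real.log t) + ε * |Real.log s - Real.log t| +
          Real.log (partialNorm r β t).toReal := fun s t hs ht => by
      have hpos : ∀ u, 0 < u → 0 < (partialNorm r β u).toReal := fun u hu =>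
        ENNReal.toReal_pos (hβ.partialNorm_ne_zero h0 hu) (hβ.partialNorm_ne_top h0 hfin hu)
      have h := ENNReal.toReal_mono (ENNReal.mul_ne_top ENNReal.ofReal_ne_top
        (hβ.partialNorm_ne_top h0 hfin ht)) (hC s t hs ht)
      rw [ENNReal.toReal_mul, ENNReal.toReal_ofReal (Real.exp_nonneg _)] at h
      rw [← Real.log_exp (C + σ * (Real.log s - Real.log t) + ε * |Real.log s - Real.log t|),
        ← Real.log_mul (Real.exp_ne_zero _) (hpos t ht).ne']
      exact Real.log_le_log (hpos s hs) h
    refine ⟨C, fun s t hs ht => abs_le.2 ⟨?_, by linarith [hle s t hs ht]⟩⟩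
    have h := hle t s ht hs
    rw [abs_sub_comm] at h
    linarith

lemma RegularlyVarying.comparable_dyadic_partialNorm (hβ : RegularlyVarying σ β) (h0 : r ≠ 0)
    (hfin : partialNorm r β 1 ≠ ∞) :
    Comparable (dyadic fun t => (partialNorm r β t).toReal)
      fun j => ellNorm r (Iic j) (dyadic β) := by
  obtain ⟨C, hC⟩ := ((hβ.partialNorm_toReal h0 hfin).moderate
    (ι := Unit)).exists_le_of_abs_log_sub_log_le (Real.log 2)
  have hIio : ∀ j : ℤ, Iio (j + 1) = Iic j := fun j => by
    ext k
    exact Int.lt_add_one_iff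
  have hnext : ∀ j : ℤ, Real.log (2 ^ (j + 1)) - Real.log (2 ^ j) = Real.log 2 := fun j => by
    simp only [Real.log_zpow]
    push_cast
    ring
  have h2 : 0 ≤ Real.log 2 := Real.log_nonneg one_le_two
  have hshift : Comparable (dyadic fun t => (partialNorm r β t).toReal)
      fun j => partialNorm r β (2 ^ (j + 1)) := by
    have hreal : ∀ j : ℤ, partialNorm r β (2 ^ (j + 1)) =
        ENNReal.ofReal (partialNorm r β (2 ^ (j + 1))).toReal := fun j =>
      (ENNReal.ofReal_toReal (hβ.partialNorm_ne_top h0 hfin (by positivity))).symm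
    rw [funext hreal]
    refine ⟨⟨C, fun j => hC () _ _ (by positivity) (by positivity) ?_⟩,
      ⟨C, fun j => hC () _ _ (by positivity) (by positivity) ?_⟩⟩
    · rw [abs_sub_comm, hnext, abs_of_nonneg h2]
    · rw [hnext, abs_of_nonneg h2]
  have h := hβ.comparable_partialNorm h0
  refine hshift.trans ⟨?_, ?_⟩
  · simpa only [hIio] using h.1.comp (· + 1)
  · simpa only [hIio] using h.2.comp (· + 1)

end PartialNorm

section KFunctional

variable {V : Type*} [AddCommGroup V]

/-- A quasi-seminorm with values in `[0, ∞]`, where `∞` means that the vector lies outside the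
space: the part of the structure of a quasi-Banach space on which estimates of K-functionals
rest. -/
structure IsQuasiSeminorm (N : V → ℝ≥0∞) : Prop where
  zero : N 0 = 0
  neg : ∀ x, N (-x) = N x
  add : (fun x : V × V => N (x.1 + x.2)) ≼ fun x => N x.1 + N x.2

lemma QuasiBanach.isQuasiSeminorm (A : QuasiBanach E) : IsQuasiSeminorm A.N where
  zero := A.zero
  neg x := by simpa using A.smul (-1) x
  add := by
    obtain ⟨C, -, hC, h⟩ := A.quasi
    exact ⟨C.toNNReal, fun x => by simpa only [ENNReal.coe_toNNReal hC] using h x.1 x.2⟩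

variable {N₀ N₁ : V → ℝ≥0∞}

lemma Kf_le_exp_abs_log_mul (N₀ N₁ : V → ℝ≥0∞) (f : V) {s t : ℝ} (hs : 0 < s) (ht : 0 < t) :
    Kf N₀ N₁ s f ≤ ENNReal.ofReal (Real.exp |Real.log s - Real.log t|) * Kf N₀ N₁ t f := by
  have hone : 1 ≤ ENNReal.ofReal (Real.exp |Real.log s - Real.log t|) :=
    ENNReal.one_le_ofReal.2 (Real.one_le_exp (abs_nonneg _))
  have hst : s ≤ Real.exp |Real.log s - Real.log t| * t :=
    calc s = Real.exp (Real.log s - Real.log t) * t := by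
          rw [← Real.log_div hs.ne' ht.ne', Real.exp_log (by positivity), div_mul_cancel₀ _ ht.ne']
      _ ≤ _ := by
          gcongr
          exact le_abs_self _
  rw [Kf, Kf, ENNReal.mul_iInf (by simp)]
  refine iInf_mono fun g => ?_
  rw [mul_add, ← mul_assoc, ← ENNReal.ofReal_mul (Real.exp_nonneg _)]
  gcongr
  exact le_mul_of_one_le_left' hone

lemma moderate_Kf (N₀ N₁ : V → ℝ≥0∞) : Moderate fun f t => Kf N₀ N₁ t f :=
  ⟨1, zero_le_one, fun f s t hs ht => (Kf_le_exp_abs_log_mul N₀ N₁ f hs ht).trans (by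
    gcongr
    linarith)⟩

/-- The values `K(2 ^ k, f)` of the K-functional at the dyadic points. -/
def dyadicKf (N₀ N₁ : V → ℝ≥0∞) (f : V) (k : ℤ) : ℝ≥0∞ := Kf N₀ N₁ (2 ^ k) f

lemma dyadic_rpow_neg_one_mul (k : ℤ) :
    dyadic (fun t => t ^ (-1 : ℝ)) k * dyadic (fun t => t) k = 1 := by
  rw [← (RegularlyVarying.rpow_id (-1)).dyadic_mul, dyadic, Real.rpow_neg_one,
    inv_mul_cancel₀ (by positivity), ofReal_one]

lemma dyadicKf_le_left (h₁ : N₁ 0 = 0) (f : V) (k : ℤ) : dyadicKf N₀ N₁ f k ≤ N₀ f :=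
  (iInf_le _ f).trans (by simp [h₁])

lemma dyadicKf_le_right (h₀ : N₀ 0 = 0) (f : V) (k : ℤ) :
    dyadicKf N₀ N₁ f k ≤ dyadic (fun t => t) k * N₁ f :=
  (iInf_le _ 0).trans (by simp [h₀, dyadic])

lemma dyadicKf_div_le_right (h₀ : N₀ 0 = 0) (f : V) (k : ℤ) :
    dyadic (fun t => t ^ (-1 : ℝ)) k * dyadicKf N₀ N₁ f k ≤ N₁ f := by
  grw [dyadicKf_le_right h₀, ← mul_assoc, dyadic_rpow_neg_one_mul, one_mul]

lemma dyadicKf_div_antitone (N₀ N₁ : V → ℝ≥0∞) (f : V) :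
    Antitone fun k => dyadic (fun t => t ^ (-1 : ℝ)) k * dyadicKf N₀ N₁ f k := fun k j hkj => by
  have hlog : Real.log (2 ^ k) ≤ Real.log (2 ^ j) :=
    Real.log_le_log (by positivity) (zpow_le_zpow_right₀ one_le_two hkj)
  dsimp only
  grw [dyadicKf, Kf_le_exp_abs_log_mul N₀ N₁ f (t := 2 ^ k) (by positivity) (by positivity)]
  rw [← mul_assoc, dyadic, ← ENNReal.ofReal_mul (by positivity), abs_of_nonneg (sub_nonneg.2 hlog),
    Real.exp_sub, Real.exp_log (by positivity), Real.exp_log (by positivity), Real.rpow_neg_one,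
    inv_mul_eq_div, div_div_cancel_left' (by positivity), ← Real.rpow_neg_one]
  rfl

lemma dyadicKf_add_dominated (h₀ : IsQuasiSeminorm N₀) (h₁ : IsQuasiSeminorm N₁) :
    (fun x : V × V × ℤ => dyadicKf N₀ N₁ (x.1 + x.2.1) x.2.2) ≼
      fun x => dyadicKf N₀ N₁ x.1 x.2.2 + dyadicKf N₀ N₁ x.2.1 x.2.2 := by
  have hsplit : (fun x : (V × V × ℤ) × V × V => N₀ (x.2.1 + x.2.2) +
      dyadic (fun t => t) x.1.2.2 * N₁ ((x.1.1 - x.2.1) + (x.1.2.1 - x.2.2))) ≼ fun x =>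
      (N₀ x.2.1 + N₀ x.2.2) +
        dyadic (fun t => t) x.1.2.2 * (N₁ (x.1.1 - x.2.1) + N₁ (x.1.2.1 - x.2.2)) :=
    (h₀.add.comp Prod.snd).add
      ((h₁.add.comp fun x : (V × V × ℤ) × V × V => (x.1.1 - x.2.1, x.1.2.1 - x.2.2)).mul_left _)
  refine Dominated.trans (.of_le fun x => ?_)
    (hsplit.iInf.trans (.of_le fun x => le_of_eq ?_))
  · refine le_iInf fun u => (iInf_le _ (u.1 + u.2)).trans_eq ?_
    rw [add_sub_add_comm]
    rfl
  · simp only [dyadicKf, Kf, iInf_prod, ENNReal.iInf_add, ENNReal.add_iInf, mul_add,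
      add_add_add_comm]
    exact iInf_comm

lemma dyadicKf_sub_dominated_add_left (h₀ : IsQuasiSeminorm N₀) (h₁ : IsQuasiSeminorm N₁) :
    (fun x : V × V × ℤ => dyadicKf N₀ N₁ (x.1 - x.2.1) x.2.2) ≼
      fun x => dyadicKf N₀ N₁ x.1 x.2.2 + N₀ x.2.1 := by
  simp only [sub_eq_add_neg]
  refine ((dyadicKf_add_dominated h₀ h₁).comp fun x : V × V × ℤ => (x.1, -x.2.1, x.2.2)).trans
    (.of_le fun x => ?_)
  dsimp only
  grw [dyadicKf_le_left h₁.zero (-x.2.1), h₀.neg]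

lemma dyadicKf_dominated_add_right (h₀ : IsQuasiSeminorm N₀) (h₁ : IsQuasiSeminorm N₁) :
    (fun x : V × V × ℤ => dyadicKf N₀ N₁ x.2.1 x.2.2) ≼ fun x =>
      dyadicKf N₀ N₁ x.1 x.2.2 + dyadic (fun t => t) x.2.2 * N₁ (x.1 - x.2.1) := by
  refine Dominated.trans (.of_le fun x => ?_)
    (((dyadicKf_add_dominated h₀ h₁).comp fun x : V × V × ℤ => (x.1, -(x.1 - x.2.1), x.2.2)).trans
      (.of_le fun x => ?_))
  · simp
  · dsimp only
    grw [dyadicKf_le_right h₀.zero (-(x.1 - x.2.1)), h₁.neg]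

end KFunctional

section Holmstedt

variable {V : Type*} [AddCommGroup V]

/-- `M` is the quasi-norm of a space near the left endpoint of the couple `(N₀, N₁)`, with weight
`w`: the space embeds in the one normed by `sup w(t) K(t, ·)`, and on vectors of `N₀` its norm is
controlled at each scale `2 ^ j` by `w(2 ^ j) N₀` and the K-functional below that scale. These are
the two estimates from which Holmstedt's formula is derived. -/
structure LeftClass (N₀ N₁ : V → ℝ≥0∞) (p : ℝ≥0∞) (w : ℝ → ℝ) (M : V → ℝ≥0∞) : Prop where
  weight_mul_dominated : (fun x : V × ℤ => dyadic w x.2 * dyadicKf N₀ N₁ x.1 x.2) ≼ fun x => M x.1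
  dominated_add : (fun x : V × ℤ => M x.1) ≼ fun x =>
    dyadic w x.2 * N₀ x.1 + ellNorm p (Iic x.2) fun k => dyadic w k * dyadicKf N₀ N₁ x.1 k

/-- The counterpart of `LeftClass` at the right endpoint of the couple: at each scale `2 ^ j` the
norm is controlled by `2 ^ j v(2 ^ j) N₁` and the K-functional above that scale. -/
structure RightClass (N₀ N₁ : V → ℝ≥0∞) (p : ℝ≥0∞) (v : ℝ → ℝ) (M : V → ℝ≥0∞) : Prop where
  weight_mul_dominated : (fun x : V × ℤ => dyadic v x.2 * dyadicKf N₀ N₁ x.1 x.2) ≼ fun x => M x.1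
  dominated_add : (fun x : V × ℤ => M x.1) ≼ fun x =>
    dyadic (fun t => v t * t) x.2 * N₁ x.1 +
      ellNorm p (Ici x.2) fun k => dyadic v k * dyadicKf N₀ N₁ x.1 k

variable {N₀ N₁ M₀ M₁ : V → ℝ≥0∞} {p : ℝ≥0∞} {w v : ℝ → ℝ} {σ₀ σ₁ : ℝ}

lemma RegularlyVarying.dyadic_div_mul_cancel (hw : RegularlyVarying σ₀ w)
    (hv : RegularlyVarying σ₁ v) (j : ℤ) :
    dyadic (fun t => w t / v t) j * dyadic v j = dyadic w j := by
  rw [← (hw.div hv).dyadic_mul]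
  exact congrArg ENNReal.ofReal (div_mul_cancel₀ _ (hv.pos _ (by positivity)).ne')

lemma weight_mul_dyadicKf_dominated (h₀ : IsQuasiSeminorm N₀) (h₁ : IsQuasiSeminorm N₁)
    (hw : RegularlyVarying σ₀ w) (hv : RegularlyVarying σ₁ v) (hM₀ : LeftClass N₀ N₁ p w M₀)
    (hM₁ : RightClass N₀ N₁ p v M₁) :
    (fun x : V × ℤ => dyadic w x.2 * dyadicKf N₀ N₁ x.1 x.2) ≼
      fun x => Kf M₀ M₁ (w (2 ^ x.2) / v (2 ^ x.2)) x.1 := by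
  have hsplit : (fun x : (V × ℤ) × V => dyadic w x.1.2 * dyadicKf N₀ N₁ x.1.1 x.1.2) ≼
      fun x => M₀ x.2 + dyadic (fun t => w t / v t) x.1.2 * M₁ (x.1.1 - x.2) := by
    refine (((dyadicKf_add_dominated h₀ h₁).comp
      fun x : (V × ℤ) × V => (x.2, x.1.1 - x.2, x.1.2)).mul_left fun x => dyadic w x.1.2).congr
        (fun x => by rw [add_sub_cancel]) (fun x => mul_add _ _ _) |>.trans
      ((hM₀.weight_mul_dominated.comp fun x : (V × ℤ) × V => (x.2, x.1.2)).add ?_)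
    refine Dominated.trans (.of_le fun x => ?_) ((hM₁.weight_mul_dominated.comp
      fun x : (V × ℤ) × V => (x.1.1 - x.2, x.1.2)).mul_left
        fun x => dyadic (fun t => w t / v t) x.1.2)
    rw [← mul_assoc, hw.dyadic_div_mul_cancel hv]
  have h := hsplit.iInf
  simp only [iInf_const] at h
  exact h

lemma LeftClass.sub_dominated (h₀ : IsQuasiSeminorm N₀) (h₁ : IsQuasiSeminorm N₁)
    (hp0 : p ≠ 0) (hp : p ≠ ∞) (hw : RegularlyVarying σ₀ w) (hσ₀ : -1 < σ₀)
    (hM₀ : LeftClass N₀ N₁ p w M₀) :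
    (fun x : (V × ℤ) × V => M₀ x.2) ≼ fun x =>
      dyadic w x.1.2 * (N₀ x.2 + dyadic (fun t => t) x.1.2 * N₁ (x.1.1 - x.2)) +
        ellNorm p (Iic x.1.2) fun k => dyadic w k * dyadicKf N₀ N₁ x.1.1 k := by
  obtain ⟨C, hC⟩ := dyadicKf_dominated_add_right h₀ h₁
  simp only [Prod.forall] at hC
  have hK : (fun x : (V × ℤ) × V =>
      ellNorm p (Iic x.1.2) fun k => dyadic w k * dyadicKf N₀ N₁ x.2 k) ≼ fun x =>
        ellNorm p (Iic x.1.2) fun k => dyadic w k * dyadicKf N₀ N₁ x.1.1 k +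
          dyadic (fun t => w t * t) k * N₁ (x.1.1 - x.2) :=
    ellNorm_dominated p ⟨C, fun x k _ => by
      grw [hC x.1.1 x.2 k, hw.dyadic_mul, mul_left_comm, mul_add, mul_assoc]⟩
  have hgeom : (fun x : (V × ℤ) × V => ellNorm p (Iic x.1.2) fun k =>
      dyadic (fun t => w t * t) k * N₁ (x.1.1 - x.2)) ≼ fun x =>
        dyadic (fun t => w t * t) x.1.2 * N₁ (x.1.1 - x.2) := by
    simp only [ellNorm_mul_const]
    exact (((hw.mul .id).ellNorm_Iic_dominated (by linarith) hp0 hp).comp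
      fun x : (V × ℤ) × V => x.1.2).mul (.refl _)
  refine (hM₀.dominated_add.comp fun x : (V × ℤ) × V => (x.2, x.1.2)).trans
    (((Dominated.refl _).add (hK.trans ((ellNorm_add_dominated _ _ _ _).trans
      ((Dominated.refl _).add hgeom)))).trans (.of_le fun x => le_of_eq ?_))
  rw [hw.dyadic_mul]
  ring

lemma RightClass.sub_dominated (h₀ : IsQuasiSeminorm N₀) (h₁ : IsQuasiSeminorm N₁)
    (hp0 : p ≠ 0) (hp : p ≠ ∞) (hv : RegularlyVarying σ₁ v) (hσ₁ : σ₁ < 0)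
    (hM₁ : RightClass N₀ N₁ p v M₁) :
    (fun x : (V × ℤ) × V => M₁ (x.1.1 - x.2)) ≼ fun x =>
      dyadic v x.1.2 * (N₀ x.2 + dyadic (fun t => t) x.1.2 * N₁ (x.1.1 - x.2)) +
        ellNorm p (Ici x.1.2) fun k => dyadic v k * dyadicKf N₀ N₁ x.1.1 k := by
  obtain ⟨C, hC⟩ := dyadicKf_sub_dominated_add_left h₀ h₁
  simp only [Prod.forall] at hC
  have hK : (fun x : (V × ℤ) × V =>
      ellNorm p (Ici x.1.2) fun k => dyadic v k * dyadicKf N₀ N₁ (x.1.1 - x.2) k) ≼ fun x =>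
        ellNorm p (Ici x.1.2) fun k => dyadic v k * dyadicKf N₀ N₁ x.1.1 k +
          dyadic v k * N₀ x.2 :=
    ellNorm_dominated p ⟨C, fun x k _ => by
      grw [hC x.1.1 x.2 k, mul_left_comm, mul_add]⟩
  have hgeom : (fun x : (V × ℤ) × V => ellNorm p (Ici x.1.2) fun k => dyadic v k * N₀ x.2) ≼
      fun x => dyadic v x.1.2 * N₀ x.2 := by
    simp only [ellNorm_mul_const]
    exact ((hv.ellNorm_Ici_dominated hσ₁ hp0 hp).comp
      fun x : (V × ℤ) × V => x.1.2).mul (.refl _)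
  refine (hM₁.dominated_add.comp fun x : (V × ℤ) × V => (x.1.1 - x.2, x.1.2)).trans
    (((Dominated.refl _).add (hK.trans ((ellNorm_add_dominated _ _ _ _).trans
      ((Dominated.refl _).add hgeom)))).trans (.of_le fun x => le_of_eq ?_))
  rw [hv.dyadic_mul]
  ring

lemma Kf_div_dominated (h₀ : IsQuasiSeminorm N₀) (h₁ : IsQuasiSeminorm N₁)
    (hp0 : p ≠ 0) (hp : p ≠ ∞) (hw : RegularlyVarying σ₀ w) (hσ₀ : -1 < σ₀)
    (hv : RegularlyVarying σ₁ v) (hσ₁ : σ₁ < 0)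
    (hM₀ : LeftClass N₀ N₁ p w M₀) (hM₁ : RightClass N₀ N₁ p v M₁) :
    (fun x : V × ℤ => Kf M₀ M₁ (w (2 ^ x.2) / v (2 ^ x.2)) x.1) ≼ fun x =>
      (ellNorm p (Iic x.2) fun k => dyadic w k * dyadicKf N₀ N₁ x.1 k) +
        dyadic (fun t => w t / v t) x.2 *
          ellNorm p (Ici x.2) fun k => dyadic v k * dyadicKf N₀ N₁ x.1 k := by
  have hsum : (fun x : (V × ℤ) × V => M₀ x.2 +
      dyadic (fun t => w t / v t) x.1.2 * M₁ (x.1.1 - x.2)) ≼ fun x =>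
      dyadic w x.1.2 * (N₀ x.2 + dyadic (fun t => t) x.1.2 * N₁ (x.1.1 - x.2)) +
        ((ellNorm p (Iic x.1.2) fun k => dyadic w k * dyadicKf N₀ N₁ x.1.1 k) +
          dyadic (fun t => w t / v t) x.1.2 *
            ellNorm p (Ici x.1.2) fun k => dyadic v k * dyadicKf N₀ N₁ x.1.1 k) := by
    refine Dominated.add_le ((hM₀.sub_dominated h₀ h₁ hp0 hp hw hσ₀).trans (.of_le fun x => ?_))
      (((hM₁.sub_dominated h₀ h₁ hp0 hp hv hσ₁).mul_left
        fun x => dyadic (fun t => w t / v t) x.1.2).trans (.of_le fun x => ?_))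
    · gcongr
      exact le_self_add
    · rw [mul_add, ← mul_assoc, hw.dyadic_div_mul_cancel hv]
      gcongr
      exact le_add_self
  have hKf : (fun x : V × ℤ => Kf M₀ M₁ (w (2 ^ x.2) / v (2 ^ x.2)) x.1) ≼ fun x =>
      dyadic w x.2 * dyadicKf N₀ N₁ x.1 x.2 +
        ((ellNorm p (Iic x.2) fun k => dyadic w k * dyadicKf N₀ N₁ x.1 k) +
          dyadic (fun t => w t / v t) x.2 *
            ellNorm p (Ici x.2) fun k => dyadic v k * dyadicKf N₀ N₁ x.1 k) :=
    hsum.iInf.trans (.of_le fun x => by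
      dsimp only
      rw [← ENNReal.iInf_add, ← ENNReal.mul_iInf (by simp [dyadic])]
      rfl)
  exact hKf.trans (.add_le (.of_le fun x => (le_ellNorm hp0 (mem_Iic.2 le_rfl)).trans le_self_add)
    (.refl _))

end Holmstedt

section ChangeOfScale

variable {ι : Type*} {σ τ : ℝ} {b c : ℝ → ℝ}

lemma RegularlyVarying.exists_dyadic_potter (hb : RegularlyVarying σ b) (hσ : 0 < σ) :
    ∃ C, ∀ i j : ℤ, |Real.log (b (2 ^ i)) - Real.log (b (2 ^ j)) - σ * Real.log 2 * (i - j)| ≤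
      C + σ * Real.log 2 / 2 * |(i - j : ℝ)| := by
  obtain ⟨C, hC⟩ := hb.potter (σ / 2) (half_pos hσ)
  refine ⟨C, fun i j => ?_⟩
  have h := hC (2 ^ i) (2 ^ j) (by positivity) (by positivity)
  rw [Real.log_zpow, Real.log_zpow, ← sub_mul, abs_mul, abs_of_pos (Real.log_pos one_lt_two)] at h
  convert h using 2 <;> ring

lemma RegularlyVarying.exists_natAbs_sub_le (hb : RegularlyVarying σ b) (hσ : 0 < σ) (D : ℝ) :
    ∃ N : ℕ, ∀ i j : ℤ, |Real.log (b (2 ^ i)) - Real.log (b (2 ^ j))| ≤ D → |i - j| ≤ N := by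
  obtain ⟨C, hC⟩ := hb.exists_dyadic_potter hσ
  have hδ : 0 < σ * Real.log 2 := mul_pos hσ (Real.log_pos one_lt_two)
  generalize σ * Real.log 2 = δ at hC hδ
  refine ⟨⌈(C + D) / (δ / 2)⌉₊, fun i j hij => ?_⟩
  have hsub : |δ * (i - j)| ≤ C + δ / 2 * |(i - j : ℝ)| + D := by
    have h := abs_sub_abs_le_abs_sub (δ * (i - j : ℝ)) (Real.log (b (2 ^ i)) - Real.log (b (2 ^ j)))
    rw [abs_sub_comm (δ * _)] at h
    linarith [hC i j]
  rw [abs_mul, abs_of_pos hδ] at hsub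
  have hle : |(i - j : ℝ)| ≤ ⌈(C + D) / (δ / 2)⌉₊ :=
    ((le_div_iff₀ (half_pos hδ)).2 (by linarith)).trans (Nat.le_ceil _)
  exact_mod_cast hle

lemma RegularlyVarying.exists_abs_log_sub_log_le (hb : RegularlyVarying σ b) (hσ : 0 < σ) :
    ∃ D, ∀ t, 0 < t → ∃ j : ℤ, |Real.log (b (2 ^ j)) - Real.log t| ≤ D := by
  obtain ⟨C, hC⟩ := hb.exists_dyadic_potter hσ
  have hδ : 0 < σ * Real.log 2 := mul_pos hσ (Real.log_pos one_lt_two)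
  generalize σ * Real.log 2 = δ at hC hδ
  set L : ℤ → ℝ := fun j => Real.log (b (2 ^ j))
  have hgrow : ∀ i j : ℤ, j ≤ i → L j + δ / 2 * (i - j) - C ≤ L i := fun i j hij => by
    have h := (abs_le.1 (hC i j)).1
    rw [abs_of_nonneg (sub_nonneg.2 (by exact_mod_cast hij))] at h
    linarith
  have hstep : ∀ j : ℤ, L (j + 1) ≤ L j + (C + 2 * δ) := fun j => by
    have h := (abs_le.1 (hC (j + 1) j)).2
    push_cast at h
    rw [add_sub_cancel_left, abs_one] at h
    linarith
  refine ⟨C + 2 * δ, fun t _ => ?_⟩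
  obtain ⟨n, hn⟩ := exists_nat_gt ((|Real.log t - L 0| + C) / (δ / 2))
  rw [div_lt_iff₀ (half_pos hδ)] at hn
  have hbdd : ∀ j, L j ≤ Real.log t → j ≤ n := fun j hj => by
    by_contra! hnj
    have hj0 : (0 : ℤ) ≤ j := (Int.natCast_nonneg n).trans hnj.le
    have hnj' : (n : ℝ) ≤ j := by exact_mod_cast hnj.le
    have h := hgrow j 0 hj0
    push_cast at h
    nlinarith [le_abs_self (Real.log t - L 0)]
  have hne : L (-n) ≤ Real.log t := by
    have h := hgrow 0 (-n) (by simp)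
    push_cast at h
    linarith [neg_abs_le (Real.log t - L 0)]
  obtain ⟨j, hj, hmax⟩ := Int.exists_greatest_of_bdd ⟨n, hbdd⟩ ⟨-n, hne⟩
  have hlt : Real.log t < L (j + 1) := by
    by_contra! h
    linarith [hmax (j + 1) h]
  exact ⟨j, abs_le.2 ⟨by linarith [hstep j], by linarith [hstep j]⟩⟩

lemma Moderate.ellNorm_comp_dominated {F : ι → ℝ → ℝ≥0∞} (hF : Moderate F)
    (hb : RegularlyVarying σ b) (hσ : 0 < σ) (hc : RegularlyVarying τ c) (hτ : 0 < τ) (r : ℝ≥0∞) :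
    (fun i => ellNorm r univ fun k => F i (b (2 ^ k))) ≼
      fun i => ellNorm r univ fun k => F i (c (2 ^ k)) := by
  obtain ⟨D, hD⟩ := hc.exists_abs_log_sub_log_le hτ
  choose κ hκ using fun k : ℤ => hD (b (2 ^ k)) (hb.pos _ (by positivity))
  obtain ⟨N, hN⟩ := hb.exists_natAbs_sub_le hσ (2 * D)
  have hfibre : ∀ k, (κ ⁻¹' {k}).encard ≤ (2 * N + 1 : ℕ) := fun k => by
    rcases (κ ⁻¹' {k}).eq_empty_or_nonempty with hk | ⟨i, hi : κ i = k⟩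
    · simp [hk]
    have hsub : κ ⁻¹' {k} ⊆ Finset.Icc (i - N) (i + N) := fun j (hj : κ j = k) => by
      have h := hN i j (by
        have := abs_sub_le (Real.log (b (2 ^ i))) (Real.log (c (2 ^ k))) (Real.log (b (2 ^ j)))
        rw [abs_sub_comm _ (Real.log (c (2 ^ k)))] at this
        linarith [hi ▸ hκ i, hj ▸ hκ j])
      rw [abs_le] at h
      simp only [Finset.coe_Icc, mem_Icc]
      omega
    refine (encard_le_encard hsub).trans ?_
    rw [encard_coe_eq_coe_finsetCard, Int.card_Icc]
    gcongr
    omega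
  obtain ⟨C, hC⟩ := hF.exists_le_of_abs_log_sub_log_le D
  refine (ellNorm_dominated r ⟨C, fun i k _ => hC i _ (c (2 ^ κ k)) (hb.pos _ (by positivity))
    (hc.pos _ (by positivity)) ?_⟩).trans ?_
  · rw [abs_sub_comm]
    exact hκ k
  · exact (_root_.ellNorm_comp_dominated r hfibre).comp fun i k => F i (c (2 ^ k))

end ChangeOfScale

lemma geomKernel_sub_comm (δ : ℝ) (j k : ℤ) : geomKernel δ (j - k) = geomKernel δ (k - j) := by
  simp only [geomKernel, Int.cast_sub, abs_sub_comm]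

section Hardy

variable {τ : ℝ} {b : ℝ → ℝ} {p r : ℝ≥0∞}

lemma RegularlyVarying.ellNorm_mul_ellNorm_Iic_dominated (hb : RegularlyVarying τ b) (hτ : τ < 0)
    (hp0 : p ≠ 0) (hp : p ≠ ∞) (hpr : p ≤ r) :
    (fun x => ellNorm r univ fun j => dyadic b j * ellNorm p (Iic j) x) ≼
      fun x => ellNorm r univ fun k => dyadic b k * x k := by
  obtain ⟨δ, hδ, hδτ⟩ := exists_between (neg_pos.2 hτ)
  obtain ⟨C, hC⟩ := hb.exists_dyadic_le_of_ge hδτ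
  have hC' : ∀ (x : ℤ → ℝ≥0∞) (j : ℤ), dyadic b j * ellNorm p (Iic j) x ≤
      C * ellNorm p univ fun k => geomKernel δ (k - j) * (dyadic b k * x k) := fun x j => by
    rw [← ellNorm_const_mul, ← ellNorm_const_mul]
    refine (ellNorm_mono fun k (hk : k ≤ j) => ?_).trans (ellNorm_mono_set (subset_univ _))
    grw [hC k j hk, geomKernel_sub_comm, mul_assoc, mul_assoc]
  have hYoung := (ellNorm_geomKernel_mul_dominated hp0 hp hpr hδ).comp
    fun (x : ℤ → ℝ≥0∞) k => dyadic b k * x k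
  exact .trans (ellNorm_dominated r ⟨C, fun x j _ => hC' x j⟩) hYoung

lemma RegularlyVarying.ellNorm_mul_ellNorm_Ici_dominated (hb : RegularlyVarying τ b) (hτ : 0 < τ)
    (hp0 : p ≠ 0) (hp : p ≠ ∞) (hpr : p ≤ r) :
    (fun x => ellNorm r univ fun j => dyadic b j * ellNorm p (Ici j) x) ≼
      fun x => ellNorm r univ fun k => dyadic b k * x k := by
  obtain ⟨δ, hδ, hδτ⟩ := exists_between hτ
  obtain ⟨C, hC⟩ := hb.exists_dyadic_le_of_le hδτ
  have hC' : ∀ (x : ℤ → ℝ≥0∞) (j : ℤ), dyadic b j * ellNorm p (Ici j) x ≤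
      C * ellNorm p univ fun k => geomKernel δ (k - j) * (dyadic b k * x k) := fun x j => by
    rw [← ellNorm_const_mul, ← ellNorm_const_mul]
    refine (ellNorm_mono fun k (hk : j ≤ k) => ?_).trans (ellNorm_mono_set (subset_univ _))
    grw [hC k j hk, geomKernel_sub_comm, mul_assoc, mul_assoc]
  have hYoung := (ellNorm_geomKernel_mul_dominated hp0 hp hpr hδ).comp
    fun (x : ℤ → ℝ≥0∞) k => dyadic b k * x k
  exact .trans (ellNorm_dominated r ⟨C, fun x j _ => hC' x j⟩) hYoung

end Hardy

section Reiteration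

variable {V : Type*} [AddCommGroup V] {N₀ N₁ M₀ M₁ : V → ℝ≥0∞} {p r : ℝ≥0∞}
  {w v Ω b : ℝ → ℝ} {σ₀ σ₁ τ : ℝ}

lemma LqNorm_weight_mul_eq_eLpNorm {q : ℝ≥0∞} (hq : q ≠ 0) {S : Set ℝ} (hS : MeasurableSet S)
    (hS_pos : S ⊆ Ioi 0) (θ : ℝ) (b : ℝ → ℝ) (G : ℝ → ℝ≥0∞) :
    LqNorm q S (fun u => ENNReal.ofReal (u ^ (-θ - q⁻¹.toReal) * b u) * G u) =
      eLpNorm (fun u => ENNReal.ofReal (u ^ (-θ) * b u) * G u) q (mulHaar.restrict S) :=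
  LqNorm_eq_eLpNorm hq hS hS_pos fun u hu => by
    have hu : 0 < u := hS_pos hu
    rw [← mul_assoc, ← ENNReal.ofReal_mul (by positivity), ← mul_assoc, ← Real.rpow_add hu,
      neg_add_eq_sub, sub_eq_add_neg]

lemma RegularlyVarying.moderate_mul_Kf (hb : RegularlyVarying τ b) (N₀ N₁ : V → ℝ≥0∞) :
    Moderate fun f t => ENNReal.ofReal (b t) * Kf N₀ N₁ t f :=
  hb.moderate.mul (moderate_Kf N₀ N₁)

lemma comparable_normK (N₀ N₁ : V → ℝ≥0∞) (θ : ℝ) (hr : r ≠ 0) (hb : RegularlyVarying τ b) :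
    Comparable (normK N₀ N₁ θ r b) fun f =>
      ellNorm r univ fun k => dyadic (fun t => t ^ (-θ) * b t) k * dyadicKf N₀ N₁ f k := by
  have h := (((RegularlyVarying.rpow_id (-θ)).mul hb).moderate_mul_Kf N₀ N₁).comparable_eLpNorm r
    fun _ => univ
  rw [preimage_univ, Measure.restrict_univ, ← mulHaar_restrict_Ioi_zero] at h
  have hnorm : normK N₀ N₁ θ r b = fun f => eLpNorm
      (fun t => ENNReal.ofReal (t ^ (-θ) * b t) * Kf N₀ N₁ t f) r (mulHaar.restrict (Ioi 0)) :=
    funext fun f => LqNorm_weight_mul_eq_eLpNorm hr measurableSet_Ioi Subset.rfl θ b _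
  rw [hnorm]
  exact h

lemma comparable_ellNorm_Kf_div (h₀ : IsQuasiSeminorm N₀) (h₁ : IsQuasiSeminorm N₁)
    (hp0 : p ≠ 0) (hp : p ≠ ∞) (hpr : p ≤ r) (hw : RegularlyVarying σ₀ w) (hσ₀ : -1 < σ₀)
    (hv : RegularlyVarying σ₁ v) (hσ₁ : σ₁ < 0) (hM₀ : LeftClass N₀ N₁ p w M₀)
    (hM₁ : RightClass N₀ N₁ p v M₁) (hΩ : RegularlyVarying τ Ω) (hτ : τ < 0)
    (hτ' : 0 < τ + (σ₀ - σ₁)) :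
    Comparable
      (fun f => ellNorm r univ fun k => dyadic Ω k * Kf M₀ M₁ (w (2 ^ k) / v (2 ^ k)) f)
      fun f => ellNorm r univ fun k => dyadic (fun t => Ω t * w t) k * dyadicKf N₀ N₁ f k := by
  simp only [hΩ.dyadic_mul, mul_assoc]
  constructor
  · refine (ellNorm_mul_dominated r univ (dyadic Ω) (z := fun f j =>
      (ellNorm p (Iic j) fun k => dyadic w k * dyadicKf N₀ N₁ f k) +
        dyadic (fun t => w t / v t) j * ellNorm p (Ici j) fun k => dyadic v k * dyadicKf N₀ N₁ f k)
      (Kf_div_dominated h₀ h₁ hp0 hp hw hσ₀ hv hσ₁ hM₀ hM₁)).trans ?_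
    simp only [mul_add, ← mul_assoc (dyadic Ω _) (dyadic (fun t => w t / v t) _), ← hΩ.dyadic_mul]
    refine (ellNorm_add_dominated r (fun _ => univ) _ _).trans (.add_le ?_ ?_)
    · exact (hΩ.ellNorm_mul_ellNorm_Iic_dominated hτ hp0 hp hpr).comp
        fun f k => dyadic w k * dyadicKf N₀ N₁ f k
    · have h := ((hΩ.mul (hw.div hv)).ellNorm_mul_ellNorm_Ici_dominated hτ' hp0 hp hpr).comp
        fun f k => dyadic v k * dyadicKf N₀ N₁ f k
      simpa only [hΩ.dyadic_mul, mul_assoc, ← mul_assoc (dyadic (fun t => w t / v t) _),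
        hw.dyadic_div_mul_cancel hv] using h
  · exact ellNorm_mul_dominated r univ _
      (weight_mul_dyadicKf_dominated h₀ h₁ hw hv hM₀ hM₁)

theorem comparable_normK_normK_of_class (h₀ : IsQuasiSeminorm N₀) (h₁ : IsQuasiSeminorm N₁)
    (hp0 : p ≠ 0) (hp : p ≠ ∞) (hpr : p ≤ r) (hw : RegularlyVarying σ₀ w) (hσ₀ : -1 < σ₀)
    (hv : RegularlyVarying σ₁ v) (hσ₁ : σ₁ < 0) (hσ : σ₁ < σ₀) (hM₀ : LeftClass N₀ N₁ p w M₀)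
    (hM₁ : RightClass N₀ N₁ p v M₁) {θ : ℝ} (hθ : 0 < θ) (hθ' : θ < 1)
    (hb : RegularlyVarying 0 b) :
    Comparable (normK M₀ M₁ θ r b) fun f => ellNorm r univ fun k =>
      dyadic (fun t => (w t / v t) ^ (-θ) * b (w t / v t) * w t) k * dyadicKf N₀ N₁ f k := by
  have hω : RegularlyVarying (-θ) fun t => t ^ (-θ) * b t := by
    simpa using (RegularlyVarying.rpow_id (-θ)).mul hb
  have hρ : RegularlyVarying (σ₀ - σ₁) fun t => w t / v t := hw.div hv
  have hρ_pos : 0 < σ₀ - σ₁ := sub_pos.2 hσ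
  have hF := hω.moderate_mul_Kf M₀ M₁
  have hscale : Comparable
      (fun f => ellNorm r univ fun k =>
        dyadic (fun t => t ^ (-θ) * b t) k * dyadicKf M₀ M₁ f k)
      fun f => ellNorm r univ fun k =>
        dyadic (fun t => (w t / v t) ^ (-θ) * b (w t / v t)) k *
          Kf M₀ M₁ (w (2 ^ k) / v (2 ^ k)) f :=
    ⟨hF.ellNorm_comp_dominated .id one_pos hρ hρ_pos r,
      hF.ellNorm_comp_dominated hρ hρ_pos .id one_pos r⟩
  exact (comparable_normK M₀ M₁ θ ((pos_iff_ne_zero.2 hp0).trans_le hpr).ne' hb).trans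
    (hscale.trans (comparable_ellNorm_Kf_div h₀ h₁ hp0 hp hpr hw hσ₀ hv hσ₁ hM₀ hM₁
      (hω.comp hρ) (by nlinarith) (by nlinarith)))

end Reiteration

section LimitingSpaces

variable {V : Type*} [AddCommGroup V] {N₀ N₁ M : V → ℝ≥0∞} {p r q : ℝ≥0∞}
  {a b w : ℝ → ℝ} {σ τ : ℝ}

lemma ellNorm_mul_ellNorm_Ici_le (hp0 : p ≠ 0) (hp : p ≠ ∞) (hpr : p ≤ r) (hpq : p ≤ q)
    (y x : ℤ → ℝ≥0∞) :
    ellNorm r univ (fun i => y i * ellNorm q (Ici i) x) ≤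
      ellNorm p univ fun k => ellNorm r (Iic k) y * x k := by
  calc ellNorm r univ (fun i => y i * ellNorm q (Ici i) x)
      ≤ ellNorm r univ fun i => y i * ellNorm p (Ici i) x :=
        ellNorm_mono fun i _ => mul_le_mul_right (ellNorm_anti_exponent hp0 hpq) _
    _ = ellNorm r univ fun i => ellNorm p univ fun k =>
          (Iic k).indicator (fun i => y i * x k) i := by
        congr 1
        funext i
        rw [← ellNorm_const_mul, ← ellNorm_univ_indicator]
        rfl
    _ ≤ ellNorm p univ fun k => ellNorm r univ ((Iic k).indicator fun i => y i * x k) := by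
        simp only [ellNorm_univ]
        exact eLpNorm_eLpNorm_count_le (fun k => Measurable.of_discrete.aemeasurable) hp0 hp hpr
    _ = ellNorm p univ fun k => ellNorm r (Iic k) y * x k := by
        simp only [ellNorm_univ_indicator, ellNorm_mul_const]

lemma ellNorm_Iic_mul_le {x z : ℤ → ℝ≥0∞} {j : ℤ} (h : ∀ i ≤ j, x j ≤ z i) (y : ℤ → ℝ≥0∞) :
    ellNorm r (Iic j) y * x j ≤ ellNorm r univ fun i => y i * z i := by
  rw [← ellNorm_mul_const]
  exact (ellNorm_mono fun i hi => mul_le_mul_right (h i hi) _).trans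
    (ellNorm_mono_set (subset_univ _))

lemma comparable_normR (N₀ N₁ : V → ℝ≥0∞) (θ : ℝ) (hr : r ≠ 0) (hq : q ≠ 0)
    (hb : RegularlyVarying σ b) (ha : RegularlyVarying τ a) :
    Comparable (normR N₀ N₁ θ r q b a) fun f => ellNorm r univ fun i =>
      dyadic (fun t => b t / a t) i * ellNorm q (Ici i) fun k =>
        dyadic (fun t => t ^ (-θ) * a t) k * dyadicKf N₀ N₁ f k := by
  have hF := ((RegularlyVarying.rpow_id (-θ)).mul ha).moderate_mul_Kf N₀ N₁
  have houter := ((hb.div ha).moderate.mul (hF.eLpNorm_Ioi q)).comparable_eLpNorm r fun _ => univ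
  simp only [preimage_univ, Measure.restrict_univ] at houter
  have hinner := (hF.comp (Prod.fst : V × ℤ → V)).comparable_eLpNorm q fun x => Ici x.2
  simp only [mulHaar_restrict_dyadicLevel_Ici] at hinner
  have hnorm : normR N₀ N₁ θ r q b a = fun f => eLpNorm (fun t => ENNReal.ofReal (b t / a t) *
      eLpNorm (fun u => ENNReal.ofReal (u ^ (-θ) * a u) * Kf N₀ N₁ u f) q
        (mulHaar.restrict (Ioi t))) r (mulHaar.restrict (Ioi 0)) := funext fun f =>
    LqNorm_eq_eLpNorm hr measurableSet_Ioi Subset.rfl fun t (ht : 0 < t) => by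
      rw [ENNReal.ofReal_mul (by positivity), mul_assoc, LqNorm_weight_mul_eq_eLpNorm hq
        measurableSet_Ioi (Ioi_subset_Ioi ht.le)]
  rw [hnorm, mulHaar_restrict_Ioi_zero]
  exact houter.trans
    ⟨ellNorm_mul_dominated r univ _ hinner.1, ellNorm_mul_dominated r univ _ hinner.2⟩

lemma LeftClass.of_dominated (h₁ : N₁ 0 = 0) (hp0 : p ≠ 0) (hp : p ≠ ∞)
    (hw : RegularlyVarying σ w) (hσ : σ < 0)
    (hle : (fun x : V × ℤ => dyadic w x.2 * dyadicKf N₀ N₁ x.1 x.2) ≼ fun x => M x.1)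
    (hM : M ≼ fun f => ellNorm p univ fun k => dyadic w k * dyadicKf N₀ N₁ f k) :
    LeftClass N₀ N₁ p w M where
  weight_mul_dominated := hle
  dominated_add := by
    have hsplit := ellNorm_univ_dominated p (fun x : V × ℤ => Ici_union_Iic (a := x.2))
      fun x k => dyadic w k * dyadicKf N₀ N₁ x.1 k
    refine (hM.comp Prod.fst).trans (hsplit.trans (.add ?_ (.refl _)))
    refine Dominated.trans (.of_le fun x => ellNorm_mono fun k _ =>
      mul_le_mul_right (dyadicKf_le_left h₁ x.1 k) _) ?_
    simp only [ellNorm_mul_const]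
    exact ((hw.ellNorm_Ici_dominated hσ hp0 hp).comp Prod.snd).mul (.refl _)

lemma leftClass_normR (h₁ : N₁ 0 = 0) {θ : ℝ} (hθ : 0 < θ) (hp0 : p ≠ 0) (hp : p ≠ ∞)
    (hpr : p ≤ r) (hpq : p ≤ q) (hb : RegularlyVarying 0 b) (ha : RegularlyVarying 0 a)
    (hfin : partialNorm r (fun t => b t / a t) 1 ≠ ∞) :
    LeftClass N₀ N₁ p
      (fun t => t ^ (-θ) * (a t * (partialNorm r (fun s => b s / a s) t).toReal))
      (normR N₀ N₁ θ r q b a) := by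
  have hr : r ≠ 0 := ((pos_iff_ne_zero.2 hp0).trans_le hpr).ne'
  have hq : q ≠ 0 := ((pos_iff_ne_zero.2 hp0).trans_le hpq).ne'
  have hα : RegularlyVarying (-θ) fun t => t ^ (-θ) * a t := by
    simpa using (RegularlyVarying.rpow_id (-θ)).mul ha
  have hβ : RegularlyVarying 0 fun t => b t / a t := by simpa using hb.div ha
  have hP := hβ.partialNorm_toReal hr hfin
  have hPβ := hβ.comparable_dyadic_partialNorm hr hfin
  have hnorm := comparable_normR N₀ N₁ θ hr hq hb ha
  have hw : RegularlyVarying (-θ) fun t =>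
      t ^ (-θ) * (a t * (partialNorm r (fun s => b s / a s) t).toReal) := by
    simpa [mul_assoc] using hα.mul hP
  have hw_mul : ∀ (k : ℤ) (y : ℝ≥0∞),
      dyadic (fun t => t ^ (-θ) * (a t * (partialNorm r (fun s => b s / a s) t).toReal)) k * y =
        dyadic (fun t => (partialNorm r (fun s => b s / a s) t).toReal) k *
          (dyadic (fun t => t ^ (-θ) * a t) k * y) := fun k y => by
    simp only [← mul_assoc, hα.dyadic_mul]
    rw [mul_comm (dyadic (fun t => t ^ (-θ) * a t) k)]
  refine .of_dominated h₁ hp0 hp hw (neg_lt_zero.2 hθ) ?_ (hnorm.1.trans ?_)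
  · simp only [hw_mul]
    refine ((hPβ.1.comp Prod.snd).mul (.refl _)).trans (.trans (.of_le fun x => ?_)
      (hnorm.2.comp Prod.fst))
    exact ellNorm_Iic_mul_le (j := x.2)
      (x := fun k => dyadic (fun t => t ^ (-θ) * a t) k * dyadicKf N₀ N₁ x.1 k)
      (fun i hi => le_ellNorm hq (mem_Ici.2 hi)) _
  · obtain ⟨C, hC⟩ := hPβ.2
    dsimp only at hC
    refine .trans (.of_le fun f => ellNorm_mul_ellNorm_Ici_le hp0 hp hpr hpq _ _)
      (ellNorm_dominated p ⟨C, fun f k _ => ?_⟩)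
    grw [hC k, hw_mul, mul_assoc]

lemma rightClass_normK (h₀ : N₀ 0 = 0) (hp0 : p ≠ 0) (hpr : p ≤ r) (hb : RegularlyVarying 0 b)
    (hfin : partialNorm r b 1 ≠ ∞) :
    RightClass N₀ N₁ p (fun t => t ^ (-1 : ℝ) * (partialNorm r b t).toReal)
      (normK N₀ N₁ 1 r b) := by
  have hr : r ≠ 0 := ((pos_iff_ne_zero.2 hp0).trans_le hpr).ne'
  have hinv : RegularlyVarying (-1) fun t => t ^ (-1 : ℝ) := .rpow_id (-1)
  have hv := hinv.mul (hb.partialNorm_toReal hr hfin)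
  have hPb := hb.comparable_dyadic_partialNorm hr hfin
  set D : V → ℤ → ℝ≥0∞ :=
    fun f k => dyadic (fun t => t ^ (-1 : ℝ)) k * dyadicKf N₀ N₁ f k with hD
  have hnorm : Comparable (normK N₀ N₁ 1 r b) fun f =>
      ellNorm r univ fun k => dyadic b k * D f k := by
    have h := comparable_normK N₀ N₁ 1 hr hb
    simp only [hinv.dyadic_mul] at h
    simpa only [hD, mul_left_comm, mul_assoc] using h
  have hv_mul : ∀ (f : V) (k : ℤ),
      dyadic (fun t => t ^ (-1 : ℝ) * (partialNorm r b t).toReal) k * dyadicKf N₀ N₁ f k =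
        dyadic (fun t => (partialNorm r b t).toReal) k * D f k := fun f k => by
    rw [hinv.dyadic_mul]
    ring
  constructor
  · simp only [hv_mul]
    refine ((hPb.1.comp Prod.snd).mul (.refl _)).trans (.trans (.of_le fun x => ?_)
      (hnorm.2.comp Prod.fst))
    exact ellNorm_Iic_mul_le (x := D x.1) (fun i hi => dyadicKf_div_antitone N₀ N₁ x.1 hi) _
  · simp only [hv_mul]
    have hsplit := ellNorm_univ_dominated r (fun x : V × ℤ => Iic_union_Ici (a := x.2))
      fun x k => dyadic b k * D x.1 k
    refine (hnorm.1.comp Prod.fst).trans (hsplit.trans (.add ?_ ?_))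
    · refine .trans (.of_le fun x => ellNorm_mono fun k _ =>
        mul_le_mul_right (dyadicKf_div_le_right h₀ x.1 k) _) ?_
      simp only [ellNorm_mul_const]
      refine ((hPb.2.comp Prod.snd).mul (.refl _)).trans (.of_le fun x => ?_)
      rw [hv.dyadic_mul, hinv.dyadic_mul, mul_right_comm (dyadic _ _),
        dyadic_rpow_neg_one_mul, one_mul]
    · have hbP : dyadic b ≼ dyadic fun t => (partialNorm r b t).toReal :=
        .trans (.of_le fun k => le_ellNorm hr (mem_Iic.2 le_rfl)) hPb.2
      obtain ⟨C, hC⟩ := hbP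
      refine (ellNorm_dominated r ⟨C, fun x k _ => ?_⟩).trans
        (.of_le fun x => ellNorm_anti_exponent hp0 hpr)
      grw [hC k, mul_assoc]

end LimitingSpaces

lemma Comparable.equivNorms {V : Type*} {N M : V → ℝ≥0∞} (h : Comparable N M) :
    EquivNorms N M := by
  obtain ⟨⟨C, hC⟩, ⟨D, hD⟩⟩ := h
  refine ⟨max 1 (max C D), by simp, by simp, fun f => ⟨?_, ?_⟩⟩
  · rw [mul_comm, ← div_eq_mul_inv]
    refine ENNReal.div_le_of_le_mul' ((hD f).trans ?_)
    gcongr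
    simp
  · refine (hC f).trans ?_
    gcongr
    simp

section WeightIdentities

variable {t c d : ℝ}

lemma rpow_neg_mul_div_rpow_neg_one_mul (ht : 0 < t) (θ₀ : ℝ) :
    t ^ (-θ₀) * c / (t ^ (-1 : ℝ) * d) = t ^ (1 - θ₀) * (c / d) := by
  rw [mul_div_mul_comm, ← Real.rpow_sub ht]
  ring_nf

lemma rpow_neg_mul_rpow_neg_mul (ht : 0 < t) (hc : 0 < c) (hd : 0 < d) (θ θ₀ x : ℝ) :
    (t ^ (1 - θ₀) * (c / d)) ^ (-θ) * x * (t ^ (-θ₀) * c) =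
      t ^ (-((1 - θ) * θ₀ + θ)) * (c ^ (1 - θ) * d ^ θ * x) := by
  have hexp : (1 - θ₀) * -θ + -θ₀ = -((1 - θ) * θ₀ + θ) := by ring
  rw [Real.mul_rpow (by positivity) (by positivity), Real.div_rpow hc.le hd.le,
    ← Real.rpow_mul ht.le, ← hexp, Real.rpow_add ht, sub_eq_neg_add 1 θ, Real.rpow_add hc,
    Real.rpow_one, Real.rpow_neg hd.le]
  field_simp

end WeightIdentities

theorem theorem23_general {V : Type*} [AddCommGroup V] {N₀ N₁ : V → ℝ≥0∞}
    (h₀ : IsQuasiSeminorm N₀) (h₁ : IsQuasiSeminorm N₁)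
    {θ θ₀ : ℝ} (hθ : 0 < θ) (hθ' : θ < 1) (hθ₀ : 0 < θ₀) (hθ₀' : θ₀ < 1)
    {q₀ r r₀ r₁ : ℝ≥0∞} (hq₀ : 0 < q₀) (hr : 0 < r) (hr₀ : 0 < r₀) (hr₁ : 0 < r₁)
    {a b₀ b₁ a₀ : ℝ → ℝ} (ha : RegularlyVarying 0 a) (hb₀ : RegularlyVarying 0 b₀)
    (hb₁ : RegularlyVarying 0 b₁) (ha₀ : RegularlyVarying 0 a₀)
    (hfin₀ : partialNorm r₀ (fun s => b₀ s / a₀ s) 1 ≠ ∞) (hfin₁ : partialNorm r₁ b₁ 1 ≠ ∞)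
    {c₀ c₁ ρ : ℝ → ℝ} (hc₀ : ∀ t, c₀ t = a₀ t * (partialNorm r₀ (fun s => b₀ s / a₀ s) t).toReal)
    (hc₁ : ∀ t, c₁ t = (partialNorm r₁ b₁ t).toReal)
    (hρ : ∀ t, ρ t = t ^ (1 - θ₀) * (c₀ t / c₁ t)) :
    EquivNorms
      (normK (normR N₀ N₁ θ₀ r₀ q₀ b₀ a₀) (normK N₀ N₁ 1 r₁ b₁) θ r a)
      (normK N₀ N₁ ((1 - θ) * θ₀ + θ) r (fun t => c₀ t ^ (1 - θ) * c₁ t ^ θ * a (ρ t))) := by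
  set p : ℝ≥0∞ := min 1 (min (min r₀ q₀) (min r₁ r)) with hp
  have hp0 : p ≠ 0 := by simp [hp, hq₀.ne', hr.ne', hr₀.ne', hr₁.ne']
  have hp_top : p ≠ ∞ := by simp [hp]
  have hM₀ : LeftClass N₀ N₁ p (fun t => t ^ (-θ₀) * c₀ t) (normR N₀ N₁ θ₀ r₀ q₀ b₀ a₀) := by
    simpa only [hc₀] using
      leftClass_normR h₁.zero hθ₀ hp0 hp_top (by simp [hp]) (by simp [hp]) hb₀ ha₀ hfin₀
  have hM₁ : RightClass N₀ N₁ p (fun t => t ^ (-1 : ℝ) * c₁ t) (normK N₀ N₁ 1 r₁ b₁) := by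
    simpa only [hc₁] using rightClass_normK h₀.zero hp0 (by simp [hp]) hb₁ hfin₁
  have hc₀_rv : RegularlyVarying 0 c₀ := by
    simpa [funext hc₀] using ha₀.mul ((hb₀.div ha₀).partialNorm_toReal hr₀.ne' hfin₀)
  have hc₁_rv : RegularlyVarying 0 c₁ := by
    simpa only [funext hc₁] using hb₁.partialNorm_toReal hr₁.ne' hfin₁
  have hρ_rv : RegularlyVarying (1 - θ₀) ρ := by
    simpa [funext hρ] using (RegularlyVarying.rpow_id (1 - θ₀)).mul (hc₀_rv.div hc₁_rv)
  have h := comparable_normK_normK_of_class h₀ h₁ hp0 hp_top (r := r) (by simp [hp])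
    (by simpa using (RegularlyVarying.rpow_id (-θ₀)).mul hc₀_rv) (by linarith)
    (by simpa using (RegularlyVarying.rpow_id (-1)).mul hc₁_rv) (by norm_num) (by linarith)
    hM₀ hM₁ hθ hθ' ha
  have hweight : ∀ k : ℤ, dyadic (fun t => (t ^ (-θ₀) * c₀ t / (t ^ (-1 : ℝ) * c₁ t)) ^ (-θ) *
      a (t ^ (-θ₀) * c₀ t / (t ^ (-1 : ℝ) * c₁ t)) * (t ^ (-θ₀) * c₀ t)) k =
      dyadic (fun t => t ^ (-((1 - θ) * θ₀ + θ)) * (c₀ t ^ (1 - θ) * c₁ t ^ θ * a (ρ t))) k :=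
    fun k => by
      have hk : (0 : ℝ) < 2 ^ k := by positivity
      simp only [dyadic, hρ, rpow_neg_mul_div_rpow_neg_one_mul hk]
      rw [rpow_neg_mul_rpow_neg_mul hk (hc₀_rv.pos _ hk) (hc₁_rv.pos _ hk)]
  simp only [hweight] at h
  exact (h.trans (comparable_normK N₀ N₁ _ hr.ne'
    (((hc₀_rv.rpow (1 - θ)).mul (hc₁_rv.rpow θ)).mul (ha.comp hρ_rv))).symm).equivNorms

theorem theorem23
    (A₀ A₁ : QuasiBanach E)
    (hne : ∃ x : E, x ≠ 0 ∧ A₀.N x ≠ ∞ ∧ A₁.N x ≠ ∞)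
    (θ θ₀ : ℝ) (hθ : 0 < θ) (hθ' : θ < 1) (hθ₀ : 0 < θ₀) (hθ₀' : θ₀ < 1)
    (q₀ r r₀ r₁ : ℝ≥0∞) (hq₀ : 0 < q₀) (hr : 0 < r) (hr₀ : 0 < r₀) (hr₁ : 0 < r₁)
    (a b₀ b₁ a₀ : ℝ → ℝ)
    (h_sv_a : SlowlyVarying a)
    (h_sv_b₀ : SlowlyVarying b₀)
    (h_sv_b₁ : SlowlyVarying b₁)
    (h_sv_a₀ : SlowlyVarying a₀)
    (hfin₀ : LqNorm r₀ (Ioo 0 1) (svWgt r₀ (fun s => b₀ s / a₀ s)) ≠ ∞)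
    (hfin₁ : LqNorm r₁ (Ioo 0 1) (svWgt r₁ (fun s => b₁ s)) ≠ ∞)
    (c₀ c₁ ρ : ℝ → ℝ)
    (hc₀ : ∀ t, c₀ t = a₀ t * (LqNorm r₀ (Ioo 0 t) (svWgt r₀ (fun s => b₀ s / a₀ s))).toReal)
    (hc₁ : ∀ t, c₁ t = (LqNorm r₁ (Ioo 0 t) (svWgt r₁ (fun s => b₁ s))).toReal)
    (hρ : ∀ t, ρ t = t ^ (1 - θ₀) * (c₀ t / c₁ t)) :
    EquivNorms
      (normK (normR A₀.N A₁.N θ₀ r₀ q₀ b₀ a₀) (normK A₀.N A₁.N 1 r₁ b₁) θ r a)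
      (normK A₀.N A₁.N ((1 - θ) * θ₀ + θ) r
        (fun t => c₀ t ^ (1 - θ) * c₁ t ^ θ * a (ρ t))) :=
  theorem23_general A₀.isQuasiSeminorm A₁.isQuasiSeminorm hθ hθ' hθ₀ hθ₀' hq₀ hr hr₀ hr₁
    h_sv_a.regularlyVarying h_sv_b₀.regularlyVarying h_sv_b₁.regularlyVarying
    h_sv_a₀.regularlyVarying hfin₀ hfin₁ hc₀ hc₁ hρ

end
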